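/- arXiv:2308.08237 — 3 statements merged into one kernel-verified Lean document; each statement's English description precedes it below -/
import Mathlib

section
/- Let T be a tree on n ≥ 3 vertices having exactly p pendant vertices. Then the rank of the matrix Max4PC_T (viewed as a matrix over the rationals) equals 2(n − p). -/
open SimpleGraph

variable {V : Type*}

/-- The maximum of the three four-point sums for vertices `w, x, y, z`:
`max (d w x + d y z) (max (d w y + d x z) (d w z + d x y))`.
This is the entry of the matrix `Max4PC` in row `{w,x}` and column `{y,z}`. -/
noncomputable def max4 (G : SimpleGraph V) (w x y z : V) : ℕ :=
  max (G.dist w x + G.dist y z) (max (G.dist w y + G.dist x z) (G.dist w z + G.dist x y))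

/-- The `Max4PC` entry as a symmetric function of two unordered pairs. -/
noncomputable def max4Sym2 (G : SimpleGraph V) : Sym2 V → Sym2 V → ℕ :=
  Sym2.lift₂ ⟨fun w x y z => max4 G w x y z, by
    intro a₁ a₂ b₁ b₂
    simp only [max4]
    constructor
    · rw [show G.dist a₂ a₁ = G.dist a₁ a₂ from G.dist_comm]
      omega
    · rw [show G.dist b₂ b₁ = G.dist b₁ b₂ from G.dist_comm]
      omega⟩

/-- The matrix `Max4PC_T`, with rows and columns indexed by the 2-element
subsets of the vertex set (non-diagonal elements of `Sym2 V`), over `ℚ`. -/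
noncomputable def max4Matrix [Fintype V] [DecidableEq V] (G : SimpleGraph V) :
    Matrix {s : Sym2 V // ¬ s.IsDiag} {s : Sym2 V // ¬ s.IsDiag} ℚ :=
  fun p q => (max4Sym2 G p.1 q.1 : ℚ)

/-!
Root the tree at an internal vertex `r`. Each edge cuts off the set of descendants of its lower end,
and the distance of two vertices is the number of cuts separating them. These cuts are laminar, so
no two of them display different quartets on the same four vertices; hence the largest four-point
sum is obtained by adding up, over all cuts, the largest of the three contributions of that cut.
For the pairs `P` and `Q` this contribution is `1 - side P * side Q + sep P * sep Q`, where `side`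
is `±1` on pairs on one side of the cut and `sep` is the indicator of separated pairs.

For a pendant vertex the contribution degenerates to `sep P + sep Q`. All these terms, together with
the constants, form a single difference of two squares, which takes the place of the trivial cut at
the root. Thus the matrix is a signed sum of the squares of two vectors per internal vertex.

In a linear relation among these vectors, only the `sep` vectors contain products of indicators of
the two vertices of a pair, and suitable mixed second differences isolate their coefficients. What
remains has the form `h x + h y` for a function `h` on vertices. It vanishes for all `x ≠ y` only if
`h = 0`, as there are at least three vertices, and the increments of `h` along the edges between
internal vertices are the remaining coefficients.
-/

section LinearAlgebra

lemma rank_mul_of_linearIndependent_col {K l m n : Type*} [Field K] [Fintype m] [Fintype n]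
    {A : Matrix l m K} (hA : LinearIndependent K A.col) (B : Matrix m n K) :
    (A * B).rank = B.rank := by
  rw [Matrix.rank, Matrix.mulVecLin_mul, LinearMap.range_comp]
  exact (Submodule.equivMapOfInjective A.mulVecLin (Matrix.mulVec_injective_iff.mpr hA)
    _).finrank_eq.symm

lemma rank_eq_card_of_eq_sum_smul_vecMulVec {K m ι : Type*} [Field K] [Fintype m] [Fintype ι]
    {v : ι → m → K} (hv : LinearIndependent K v) {d : ι → K} (hd : ∀ i, d i ≠ 0)
    {M : Matrix m m K} (hM : M = ∑ i, d i • Matrix.vecMulVec (v i) (v i)) :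
    M.rank = Fintype.card ι := by
  classical
  have M_eq : M = (Matrix.of v).transpose * (Matrix.diagonal d * Matrix.of v) := by
    ext p q
    rw [hM, Matrix.sum_apply, Matrix.mul_apply]
    refine Finset.sum_congr rfl fun i _ => ?_
    simp only [Matrix.smul_apply, Matrix.vecMulVec_apply, smul_eq_mul, Matrix.diagonal_mul,
      Matrix.transpose_apply, Matrix.of_apply]
    ring
  have diagonal_det_ne_zero : (Matrix.diagonal d).det ≠ 0 := by
    rw [Matrix.det_diagonal]
    exact Finset.prod_ne_zero_iff.mpr fun i _ => hd i
  rw [M_eq, rank_mul_of_linearIndependent_col (A := (Matrix.of v).transpose) hv,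
    Matrix.rank_mul_eq_right_of_det_ne_zero _ _ diagonal_det_ne_zero]
  exact LinearIndependent.rank_matrix (M := Matrix.of v) hv

lemma eq_zero_of_pairwise_add_eq_zero {M : Type*} [AddCommGroup M] [IsAddTorsionFree M]
    (hV : 3 ≤ ENat.card V) {h : V → M} (hh : ∀ x y, x ≠ y → h x + h y = 0) : h = 0 := by
  funext x
  obtain ⟨y, hyx, -⟩ := ENat.exists_ne_ne_of_three_le hV x x
  obtain ⟨z, hzx, hzy⟩ := ENat.exists_ne_ne_of_three_le hV x y
  have two_nsmul_eq_zero : 2 • h x = 0 := calc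
    2 • h x = (h x + h y) + (h x + h z) - (h y + h z) := by abel
    _ = 0 := by rw [hh x y hyx.symm, hh x z hzx.symm, hh y z hzy.symm]; simp
  simpa using two_nsmul_eq_zero

lemma sum_mul_sub_mul_sub_eq_zero {ι R : Type*} [CommRing R] {s : Finset ι} {b : ι → R}
    {χ : ι → V → R} {h : V → R}
    (hh : ∀ x y, x ≠ y → h x + h y = ∑ i ∈ s, b i * (χ i x * χ i y)) {t u v w : V}
    (htv : t ≠ v) (htw : t ≠ w) (huv : u ≠ v) (huw : u ≠ w) :
    ∑ i ∈ s, b i * ((χ i t - χ i u) * (χ i v - χ i w)) = 0 := calc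
  _ = (∑ i ∈ s, b i * (χ i t * χ i v)) - (∑ i ∈ s, b i * (χ i t * χ i w))
      - (∑ i ∈ s, b i * (χ i u * χ i v)) + ∑ i ∈ s, b i * (χ i u * χ i w) := by
    simp only [← Finset.sum_sub_distrib, ← Finset.sum_add_distrib]
    exact Finset.sum_congr rfl fun i _ => by ring
  _ = 0 := by
    rw [← hh t v htv, ← hh t w htw, ← hh u v huv, ← hh u w huw]
    ring

end LinearAlgebra

section Cuts

/-- The separation indicator of the cut `{S, Sᶜ}`: the value at the pair `s(x, y)` is `1` if exactly
one of `x` and `y` lies in `S`, and `0` otherwise. -/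
noncomputable def cutSep (S : Set V) : Sym2 V → ℚ :=
  Sym2.lift ⟨fun x y => S.indicator 1 x + S.indicator 1 y - 2 * (S.indicator 1 x * S.indicator 1 y),
    fun x y => by ring⟩

/-- The side of the cut `{S, Sᶜ}` on which a pair lies: `1` if the pair is inside `S`, `-1` if it is
outside, and `0` if the cut separates it. -/
noncomputable def cutSide (S : Set V) : Sym2 V → ℚ :=
  Sym2.lift ⟨fun x y => S.indicator 1 x + S.indicator 1 y - 1, fun x y => by ring⟩

/-- The contribution of the cut `{S, Sᶜ}` to the largest of the three four-point sums, in the form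
that exhibits its rank-two dependence on the two pairs. -/
noncomputable def cutMax (S : Set V) (P Q : Sym2 V) : ℚ :=
  1 - cutSide S P * cutSide S Q + cutSep S P * cutSep S Q

/-- The cut `{S, Sᶜ}` displays the quartet `wx|yz`: one side contains `w` and `x`, the other `y`
and `z`. -/
def DisplaysQuartet (S : Set V) (w x y z : V) : Prop :=
  (w ∈ S ↔ x ∈ S) ∧ (y ∈ S ↔ z ∈ S) ∧ ¬ (w ∈ S ↔ y ∈ S)

lemma cutSep_mk (S : Set V) (x y : V) : cutSep S s(x, y) =
    S.indicator 1 x + S.indicator 1 y - 2 * (S.indicator 1 x * S.indicator 1 y) := rfl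

lemma cutSide_mk (S : Set V) (x y : V) :
    cutSide S s(x, y) = S.indicator 1 x + S.indicator 1 y - 1 := rfl

lemma indicator_one_eq_zero_or_one (S : Set V) (x : V) :
    S.indicator (1 : V → ℚ) x = 0 ∨ S.indicator (1 : V → ℚ) x = 1 :=
  Set.indicator_eq_zero_or_self S 1 x

lemma cutSep_triangle (S : Set V) (x y z : V) :
    cutSep S s(x, z) ≤ cutSep S s(x, y) + cutSep S s(y, z) := by
  simp only [cutSep_mk]
  rcases indicator_one_eq_zero_or_one S x with hx | hx <;>
    rcases indicator_one_eq_zero_or_one S y with hy | hy <;>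
    rcases indicator_one_eq_zero_or_one S z with hz | hz <;> rw [hx, hy, hz] <;> norm_num

-- As a polynomial in the four indicators, `cutMax` is the symmetric function `e₁ - 2 e₃ + 4 e₄`.
lemma cutMax_swap (S : Set V) (w x y z : V) :
    cutMax S s(w, x) s(y, z) = cutMax S s(w, y) s(x, z) := by
  simp only [cutMax, cutSep_mk, cutSide_mk]
  ring

lemma cutSep_add_cutSep_le_cutMax (S : Set V) (w x y z : V) :
    cutSep S s(w, x) + cutSep S s(y, z) ≤ cutMax S s(w, x) s(y, z) := by
  simp only [cutMax, cutSep_mk, cutSide_mk]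
  rcases indicator_one_eq_zero_or_one S w with hw | hw <;>
    rcases indicator_one_eq_zero_or_one S x with hx | hx <;>
    rcases indicator_one_eq_zero_or_one S y with hy | hy <;>
    rcases indicator_one_eq_zero_or_one S z with hz | hz <;> rw [hw, hx, hy, hz] <;> norm_num

lemma cutSep_add_cutSep_eq_cutMax {S : Set V} {w x y z : V} (hS : ¬ DisplaysQuartet S w x y z) :
    cutSep S s(w, x) + cutSep S s(y, z) = cutMax S s(w, x) s(y, z) := by
  classical
  simp only [cutMax, cutSep_mk, cutSide_mk, Set.indicator_apply, Pi.one_apply]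
  unfold DisplaysQuartet at hS
  by_cases hw : w ∈ S <;> by_cases hx : x ∈ S <;> by_cases hy : y ∈ S <;> by_cases hz : z ∈ S <;>
    simp_all <;> norm_num

variable {ι : Type*}

/-- A laminar family of sets: any two members are nested or disjoint. -/
def IsLaminar (C : ι → Set V) : Prop :=
  ∀ i j, C i ⊆ C j ∨ C j ⊆ C i ∨ Disjoint (C i) (C j)

-- Displaying both quartets would make all four intersections of the sides of the two cuts nonempty.
lemma IsLaminar.not_displaysQuartet {C : ι → Set V} (hC : IsLaminar C) {i j : ι} {w x y z : V}
    (hi : DisplaysQuartet (C i) w x y z) : ¬ DisplaysQuartet (C j) w y x z := by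
  rcases hC i j with hij | hji | hdisj <;> grind [DisplaysQuartet]

variable [Fintype ι]

/-- The cut metric of a finite family of sets: the number of members that separate `x` from `y`. -/
noncomputable def cutDist (C : ι → Set V) (x y : V) : ℚ := ∑ i, cutSep (C i) s(x, y)

lemma cutDist_comm (C : ι → Set V) (x y : V) : cutDist C x y = cutDist C y x := by
  simp only [cutDist, Sym2.eq_swap]

lemma cutDist_self (C : ι → Set V) (x : V) : cutDist C x x = 0 :=
  Finset.sum_eq_zero fun i _ => by
    rw [cutSep_mk]
    rcases indicator_one_eq_zero_or_one (C i) x with hx | hx <;> rw [hx] <;> norm_num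

lemma cutDist_triangle (C : ι → Set V) (x y z : V) :
    cutDist C x z ≤ cutDist C x y + cutDist C y z := by
  simp only [cutDist, ← Finset.sum_add_distrib]
  exact Finset.sum_le_sum fun i _ => cutSep_triangle (C i) x y z

lemma cutDist_add_cutDist_le (C : ι → Set V) (w x y z : V) :
    cutDist C w x + cutDist C y z ≤ ∑ i, cutMax (C i) s(w, x) s(y, z) := by
  simp only [cutDist, ← Finset.sum_add_distrib]
  exact Finset.sum_le_sum fun i _ => cutSep_add_cutSep_le_cutMax (C i) w x y z

lemma cutDist_add_cutDist_eq {C : ι → Set V} {w x y z : V}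
    (hC : ∀ i, ¬ DisplaysQuartet (C i) w x y z) :
    cutDist C w x + cutDist C y z = ∑ i, cutMax (C i) s(w, x) s(y, z) := by
  simp only [cutDist, ← Finset.sum_add_distrib]
  exact Finset.sum_congr rfl fun i _ => cutSep_add_cutSep_eq_cutMax (hC i)

-- If some cut displays `wx|yz`, then by laminarity none displays `wy|xz`, so one of these two
-- four-point sums attains the bound.
lemma IsLaminar.max_cutDist_add_cutDist {C : ι → Set V} (hC : IsLaminar C) (w x y z : V) :
    max (cutDist C w x + cutDist C y z)
      (max (cutDist C w y + cutDist C x z) (cutDist C w z + cutDist C x y)) =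
      ∑ i, cutMax (C i) s(w, x) s(y, z) := by
  have swap_xy : ∑ i, cutMax (C i) s(w, x) s(y, z) = ∑ i, cutMax (C i) s(w, y) s(x, z) :=
    Finset.sum_congr rfl fun i _ => cutMax_swap (C i) w x y z
  have swap_xz : ∑ i, cutMax (C i) s(w, x) s(y, z) = ∑ i, cutMax (C i) s(w, z) s(x, y) := by
    refine Finset.sum_congr rfl fun i _ => ?_
    rw [Sym2.eq_swap (a := y), cutMax_swap]
  apply le_antisymm
  · refine max_le (cutDist_add_cutDist_le C w x y z) (max_le ?_ ?_)
    · exact swap_xy ▸ cutDist_add_cutDist_le C w y x z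
    · exact swap_xz ▸ cutDist_add_cutDist_le C w z x y
  · by_cases hdisplay : ∃ i, DisplaysQuartet (C i) w x y z
    · obtain ⟨i, hi⟩ := hdisplay
      rw [swap_xy, ← cutDist_add_cutDist_eq fun j => hC.not_displaysQuartet hi]
      exact (le_max_left _ _).trans (le_max_right _ _)
    · rw [← cutDist_add_cutDist_eq fun i hi => hdisplay ⟨i, hi⟩]
      exact le_max_left _ _

lemma IsLaminar.max4Sym2_eq_sum_cutMax {C : ι → Set V} (hC : IsLaminar C) {G : SimpleGraph V}
    (hG : ∀ x y, (G.dist x y : ℚ) = cutDist C x y) (P Q : Sym2 V) :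
    (max4Sym2 G P Q : ℚ) = ∑ i, cutMax (C i) P Q := by
  induction P with | _ w x
  induction Q with | _ y z
  rw [← hC.max_cutDist_add_cutDist]
  simp only [max4Sym2, Sym2.lift₂_mk, max4, Nat.cast_max, Nat.cast_add, hG]

end Cuts

section RootedTree

variable {G : SimpleGraph V} {r p q v x y : V}

/-- `p` is the parent of `x` when `G` is rooted at `r`: the neighbour of `x` one step closer
to `r`. -/
def IsParent (G : SimpleGraph V) (r p x : V) : Prop :=
  G.Adj p x ∧ G.dist r x = G.dist r p + 1

/-- The descendants of `v` (including `v`) when `G` is rooted at `r`, described metrically: `v` lies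
on a geodesic from `r` to `x`. In a tree with `v ≠ r` this is the side away from `r` of the edge
joining `v` to its parent, so the non-root vertices stand for the edges. -/
def descendants (G : SimpleGraph V) (r v : V) : Set V :=
  {x | G.dist r x = G.dist r v + G.dist v x}

lemma exists_isParent (hG : G.Connected) (hx : x ≠ r) : ∃ p, IsParent G r p x := by
  obtain ⟨walk, hwalk⟩ := hG.exists_walk_length_eq_dist x r
  cases walk with
  | nil => exact absurd rfl hx
  | @cons _ p _ hxp tail =>
    rw [Walk.length_cons] at hwalk
    have dist_le_length : G.dist p r ≤ tail.length := dist_le tail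
    have dist_le_dist : G.dist x r ≤ G.dist x p + G.dist p r := hG.dist_triangle
    rw [dist_eq_one_iff_adj.mpr hxp] at dist_le_dist
    refine ⟨p, hxp.symm, ?_⟩
    rw [dist_comm, dist_comm (u := r)]
    omega

lemma IsParent.ne_root (hp : IsParent G r p x) : x ≠ r := by
  rintro rfl
  simpa using hp.2

lemma parent_induction (hG : G.Connected) {motive : V → Prop} (root : motive r)
    (step : ∀ p x, IsParent G r p x → motive p → motive x) (x : V) : motive x := by
  induction hdepth : G.dist r x generalizing x with
  | zero => exact hG.dist_eq_zero_iff.mp hdepth ▸ root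
  | succ depth ih =>
    have hx : x ≠ r := by
      rintro rfl
      simp at hdepth
    obtain ⟨p, hp⟩ := exists_isParent hG hx
    exact step p x hp (ih p (by have := hp.2; omega))

lemma IsParent.unique (hG : G.IsTree) (hp : IsParent G r p x) (hq : IsParent G r q x) : p = q := by
  obtain ⟨walk_p, hwalk_p⟩ := hG.connected.exists_walk_length_eq_dist r p
  obtain ⟨walk_q, hwalk_q⟩ := hG.connected.exists_walk_length_eq_dist r q
  have path_p : (walk_p.concat hp.1).IsPath :=
    Walk.isPath_of_length_eq_dist _ (by rw [Walk.length_concat, hwalk_p, hp.2])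
  have path_q : (walk_q.concat hq.1).IsPath :=
    Walk.isPath_of_length_eq_dist _ (by rw [Walk.length_concat, hwalk_q, hq.2])
  have concat_eq_concat : walk_p.concat hp.1 = walk_q.concat hq.1 :=
    (hG.existsUnique_path r x).unique path_p path_q
  simpa using congrArg Walk.penultimate concat_eq_concat

lemma isParent_or_isParent_of_adj (hG : G.IsTree) (r : V) (hxy : G.Adj x y) :
    IsParent G r x y ∨ IsParent G r y x :=
  (hG.dist_eq_dist_add_one_of_adj r hxy).symm.imp (⟨hxy, ·⟩) (⟨hxy.symm, ·⟩)

lemma mem_descendants : x ∈ descendants G r v ↔ G.dist r x = G.dist r v + G.dist v x := Iff.rfl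

lemma self_mem_descendants (G : SimpleGraph V) (r v : V) : v ∈ descendants G r v := by
  simp [descendants]

lemma descendants_root (G : SimpleGraph V) (r : V) : descendants G r r = Set.univ := by
  simp [descendants]

lemma root_mem_descendants_iff (hG : G.Connected) : r ∈ descendants G r v ↔ v = r := by
  rw [mem_descendants, dist_self, dist_comm (u := v), ← hG.dist_eq_zero_iff, dist_comm (u := v)]
  omega

lemma descendants_subset_descendants (hG : G.Connected) (hx : x ∈ descendants G r v) :
    descendants G r x ⊆ descendants G r v := by
  intro y hy
  have dist_r_y : G.dist r y ≤ G.dist r v + G.dist v y := hG.dist_triangle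
  have dist_v_y : G.dist v y ≤ G.dist v x + G.dist x y := hG.dist_triangle
  simp only [mem_descendants] at hx hy ⊢
  omega

lemma IsParent.notMem_descendants (hp : IsParent G r p x) : p ∉ descendants G r x := by
  intro (hmem : G.dist r p = G.dist r x + G.dist x p)
  have := hp.2
  omega

lemma IsParent.mem_descendants_iff (hG : G.IsTree) (hp : IsParent G r p x) :
    x ∈ descendants G r v ↔ v = x ∨ p ∈ descendants G r v := by
  constructor
  · intro (hx : G.dist r x = G.dist r v + G.dist v x)
    refine or_iff_not_imp_left.mpr fun hvx => ?_
    obtain ⟨q, hqx, hq⟩ := exists_isParent hG.connected (Ne.symm hvx)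
    have dist_r_q : G.dist r q ≤ G.dist r v + G.dist v q := hG.connected.dist_triangle
    have hq' : IsParent G r q x :=
      (isParent_or_isParent_of_adj hG r hqx).resolve_right fun h => by have := h.2; omega
    have := hq'.2
    have q_mem : q ∈ descendants G r v := by
      rw [mem_descendants]
      omega
    exact hp.unique hG hq' ▸ q_mem
  · rintro (rfl | hmem)
    · exact self_mem_descendants G r v
    · have x_mem : x ∈ descendants G r p := by
        rw [mem_descendants, dist_eq_one_iff_adj.mpr hp.1, hp.2]
      exact descendants_subset_descendants hG.connected hmem x_mem

lemma isLaminar_descendants (hG : G.IsTree) (r : V) : IsLaminar (descendants G r) := by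
  have comparable (u v x : V) (hu : x ∈ descendants G r u) (hv : x ∈ descendants G r v) :
      u ∈ descendants G r v ∨ v ∈ descendants G r u := by
    induction x using parent_induction (r := r) hG.connected with
    | root =>
      obtain rfl := (root_mem_descendants_iff hG.connected).mp hu
      exact Or.inr (descendants_root G u ▸ Set.mem_univ v)
    | step p x hp ih =>
      rcases (hp.mem_descendants_iff hG).mp hu with rfl | hu'
      · exact Or.inl hv
      rcases (hp.mem_descendants_iff hG).mp hv with rfl | hv'
      · exact Or.inr hu
      exact ih hu' hv'
  intro u v
  by_cases hdisj : Disjoint (descendants G r u) (descendants G r v)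
  · exact Or.inr (Or.inr hdisj)
  · obtain ⟨x, hxu, hxv⟩ := Set.not_disjoint_iff.mp hdisj
    rcases comparable u v x hxu hxv with huv | hvu
    · exact Or.inl (descendants_subset_descendants hG.connected huv)
    · exact Or.inr (Or.inl (descendants_subset_descendants hG.connected hvu))

lemma IsParent.indicator_descendants_sub [DecidableEq V] (hG : G.IsTree) (hp : IsParent G r p x)
    (v : V) : (descendants G r v).indicator (1 : V → ℚ) x - (descendants G r v).indicator 1 p =
      if v = x then 1 else 0 := by
  classical
  simp only [Set.indicator_apply, Pi.one_apply, hp.mem_descendants_iff hG]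
  by_cases hvx : v = x
  · subst hvx
    simp [hp.notMem_descendants]
  · simp [hvx]

variable [Fintype V]

lemma IsParent.cutDist_descendants_eq_add_one (hG : G.IsTree) (hp : IsParent G r p x)
    (hy : y ∉ descendants G r x) :
    cutDist (descendants G r) x y = cutDist (descendants G r) p y + 1 := by
  classical
  rw [← sub_eq_iff_eq_add', cutDist, cutDist, ← Finset.sum_sub_distrib,
    ← Fintype.sum_ite_eq' x fun _ => (1 : ℚ)]
  refine Finset.sum_congr rfl fun v _ => ?_
  calc cutSep (descendants G r v) s(x, y) - cutSep (descendants G r v) s(p, y)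
    _ = ((descendants G r v).indicator 1 x - (descendants G r v).indicator 1 p) *
        (1 - 2 * (descendants G r v).indicator 1 y) := by
      simp only [cutSep_mk]
      ring
    _ = if v = x then 1 else 0 := by
      rw [hp.indicator_descendants_sub hG v]
      split_ifs with hvx
      · subst hvx
        simp [hy]
      · ring

lemma cutDist_descendants_of_adj (hG : G.IsTree) (r : V) (hxy : G.Adj x y) :
    cutDist (descendants G r) x y = 1 := by
  have cutDist_parent {p x : V} (hp : IsParent G r p x) : cutDist (descendants G r) x p = 1 := by
    rw [hp.cutDist_descendants_eq_add_one hG hp.notMem_descendants, cutDist_self, zero_add]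
  rcases isParent_or_isParent_of_adj hG r hxy with hp | hp
  · rw [cutDist_comm, cutDist_parent hp]
  · exact cutDist_parent hp

lemma cutDist_descendants_le_length (hG : G.IsTree) (r : V) (walk : G.Walk x y) :
    cutDist (descendants G r) x y ≤ walk.length := by
  induction walk with
  | nil => simp [cutDist_self]
  | @cons x z y hxz tail ih =>
    calc cutDist (descendants G r) x y
      _ ≤ cutDist (descendants G r) x z + cutDist (descendants G r) z y :=
        cutDist_triangle _ x z y
      _ ≤ 1 + tail.length := add_le_add (cutDist_descendants_of_adj hG r hxz).le ih
      _ = (Walk.cons hxz tail).length := by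
        rw [Walk.length_cons]
        push_cast
        ring

lemma cutDist_descendants_root (hG : G.IsTree) (r x : V) :
    cutDist (descendants G r) x r = G.dist r x := by
  induction x using parent_induction (r := r) hG.connected with
  | root => simp [cutDist_self]
  | step p x hp ih =>
    have root_notMem : r ∉ descendants G r x :=
      fun hmem => hp.ne_root ((root_mem_descendants_iff hG.connected).mp hmem)
    rw [hp.cutDist_descendants_eq_add_one hG root_notMem, ih, hp.2]
    push_cast
    ring

lemma dist_le_cutDist_descendants_of_mem (hG : G.IsTree) (hy : y ∈ descendants G r x) :
    G.dist x y ≤ cutDist (descendants G r) x y := by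
  have triangle := cutDist_triangle (descendants G r) y x r
  rw [cutDist_descendants_root hG, cutDist_descendants_root hG, mem_descendants.mp hy,
    cutDist_comm] at triangle
  push_cast at triangle
  linarith

lemma dist_le_cutDist_descendants (hG : G.IsTree) (r x y : V) :
    G.dist x y ≤ cutDist (descendants G r) x y := by
  induction x using parent_induction (r := r) hG.connected with
  | root => exact dist_le_cutDist_descendants_of_mem hG (descendants_root G r ▸ Set.mem_univ y)
  | step p x hp ih =>
    by_cases hy : y ∈ descendants G r x
    · exact dist_le_cutDist_descendants_of_mem hG hy
    have dist_le : G.dist x y ≤ 1 + G.dist p y :=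
      dist_eq_one_iff_adj.mpr hp.1.symm ▸ hG.connected.dist_triangle
    calc (G.dist x y : ℚ)
      _ ≤ 1 + G.dist p y := mod_cast dist_le
      _ ≤ cutDist (descendants G r) p y + 1 := by linarith
      _ = cutDist (descendants G r) x y := (hp.cutDist_descendants_eq_add_one hG hy).symm

theorem dist_eq_cutDist_descendants (hG : G.IsTree) (r x y : V) :
    G.dist x y = cutDist (descendants G r) x y := by
  obtain ⟨walk, hwalk⟩ := hG.connected.exists_walk_length_eq_dist x y
  exact le_antisymm (dist_le_cutDist_descendants hG r x y)
    (hwalk ▸ cutDist_descendants_le_length hG r walk)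

end RootedTree

section Pendant

variable {G : SimpleGraph V} {r p v x : V}

lemma exists_adj_ne_of_degree_ne_one [Fintype (G.neighborSet v)] (hv : G.degree v ≠ 1)
    (hx : G.Adj v x) : ∃ y, G.Adj v y ∧ y ≠ x := by
  by_contra! hunique
  exact hv (degree_eq_one_iff_existsUnique_adj.mpr ⟨x, hx, hunique⟩)

lemma IsParent.eq_root_of_degree_eq_one [Fintype (G.neighborSet p)] (hG : G.Connected)
    (hp : IsParent G r p x) (hdeg : G.degree p = 1) : p = r := by
  by_contra hpr
  obtain ⟨q, hq⟩ := exists_isParent hG hpr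
  obtain rfl : x = q := (degree_eq_one_iff_existsUnique_adj.mp hdeg).unique hp.1 hq.1.symm
  have := hp.2
  have := hq.2
  omega

lemma exists_child_of_degree_ne_one [Fintype (G.neighborSet v)] (hG : G.IsTree)
    (hv : G.degree v ≠ 1) (hvr : v ≠ r) : ∃ x, IsParent G r v x := by
  obtain ⟨p, hp⟩ := exists_isParent hG.connected hvr
  obtain ⟨x, hvx, hxp⟩ := exists_adj_ne_of_degree_ne_one hv hp.1.symm
  exact ⟨x, (isParent_or_isParent_of_adj hG r hvx).resolve_right fun hx => hxp (hx.unique hG hp)⟩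

lemma exists_isParent_degree_ne_one [Fintype V] [DecidableRel G.Adj] (hG : G.Connected)
    (hr : G.degree r ≠ 1) (hv : v ≠ r) : ∃ p, IsParent G r p v ∧ G.degree p ≠ 1 := by
  obtain ⟨p, hp⟩ := exists_isParent hG hv
  exact ⟨p, hp, fun hdeg => hr (hp.eq_root_of_degree_eq_one hG hdeg ▸ hdeg)⟩

lemma IsParent.exists_ne_notMem_descendants [Fintype (G.neighborSet p)] (hG : G.IsTree)
    (hp : IsParent G r p v) (hdeg : G.degree p ≠ 1) : ∃ x, x ≠ p ∧ x ∉ descendants G r v := by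
  obtain ⟨x, hpx, hxv⟩ := exists_adj_ne_of_degree_ne_one hdeg hp.1
  refine ⟨x, hpx.ne', fun hmem => hp.notMem_descendants ?_⟩
  rcases isParent_or_isParent_of_adj hG r hpx with hx | hx
  · exact ((hx.mem_descendants_iff hG).mp hmem).resolve_left hxv.symm
  · exact (hx.mem_descendants_iff hG).mpr (Or.inr hmem)

lemma descendants_eq_singleton [Fintype (G.neighborSet v)] (hG : G.IsTree)
    (hv : G.degree v = 1) (hvr : v ≠ r) : descendants G r v = {v} := by
  refine Set.Subset.antisymm (fun x hx => ?_)
    (Set.singleton_subset_iff.mpr (self_mem_descendants G r v))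
  induction x using parent_induction (r := r) hG.connected with
  | root => exact absurd ((root_mem_descendants_iff hG.connected).mp hx) hvr
  | step p x hp ih =>
    rcases (hp.mem_descendants_iff hG).mp hx with rfl | hmem
    · rfl
    · obtain rfl : p = v := ih hmem
      exact absurd (hp.eq_root_of_degree_eq_one hG.connected hv) hvr

lemma exists_degree_ne_one [Fintype V] [DecidableRel G.Adj] (hG : G.IsTree)
    (hV : Fintype.card V ≠ 2) : ∃ v, G.degree v ≠ 1 := by
  classical
  by_contra! hdeg
  have handshake := G.sum_degrees_eq_twice_card_edges
  have card_edges := hG.card_edgeFinset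
  simp only [hdeg, Finset.sum_const, Finset.card_univ, smul_eq_mul, mul_one] at handshake
  omega

end Pendant

section Decomposition

lemma cutMax_univ (P Q : Sym2 V) : cutMax Set.univ P Q = 0 := by
  induction P with | _ w x
  induction Q with | _ y z
  simp only [cutMax, cutSep_mk, cutSide_mk, Set.indicator_univ, Pi.one_apply]
  norm_num

lemma cutSide_singleton (v : V) {P : Sym2 V} (hP : ¬ P.IsDiag) :
    cutSide {v} P = cutSep {v} P - 1 := by
  classical
  induction P with | _ x y
  have hxy : x ≠ y := hP
  have indicator_mul_indicator :
      ({v} : Set V).indicator (1 : V → ℚ) x * Set.indicator {v} 1 y = 0 := by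
    grind [Set.indicator_apply]
  rw [cutSide_mk, cutSep_mk, indicator_mul_indicator]
  ring

lemma cutMax_singleton (v : V) {P Q : Sym2 V} (hP : ¬ P.IsDiag) (hQ : ¬ Q.IsDiag) :
    cutMax {v} P Q = cutSep {v} P + cutSep {v} Q := by
  rw [cutMax, cutSide_singleton v hP, cutSide_singleton v hQ]
  ring

lemma sum_cutSep_singleton (L : Finset V) {P : Sym2 V} (hP : ¬ P.IsDiag) :
    ∑ v ∈ L, cutSep {v} P = cutSide L P + 1 := by
  classical
  have sum_indicator (x : V) :
      ∑ v ∈ L, ({v} : Set V).indicator (1 : V → ℚ) x = (L : Set V).indicator 1 x := by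
    simp [Set.indicator_apply]
  calc ∑ v ∈ L, cutSep {v} P
    _ = ∑ v ∈ L, (cutSide {v} P + 1) :=
      Finset.sum_congr rfl fun v _ => by rw [cutSide_singleton v hP, sub_add_cancel]
    _ = cutSide L P + 1 := by
      induction P with | _ x y
      simp only [cutSide_mk, sub_add_cancel, Finset.sum_add_distrib, sum_indicator]

variable [Fintype V] {G : SimpleGraph V} [DecidableRel G.Adj]

variable (G) in
/-- The pendant vertices of `G`. -/
def pendants : Finset V := Finset.univ.filter fun v => G.degree v = 1

lemma mem_pendants {v : V} : v ∈ pendants G ↔ G.degree v = 1 := by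
  simp [pendants]

variable (r : {v : V // G.degree v ≠ 1})

lemma sum_pendant_cutMax_descendants (hG : G.IsTree) {P Q : Sym2 V} (hP : ¬ P.IsDiag)
    (hQ : ¬ Q.IsDiag) : ∑ v : {v : V // G.degree v = 1}, cutMax (descendants G r v) P Q =
      cutSide (pendants G) P + cutSide (pendants G) Q + 2 := by
  have cutMax_pendant (v : {v : V // G.degree v = 1}) :
      cutMax (descendants G r v) P Q = cutSep {v.1} P + cutSep {v.1} Q := by
    have hvr : v.1 ≠ r := fun h => r.2 (h ▸ v.2)
    rw [descendants_eq_singleton hG v.2 hvr, cutMax_singleton v.1 hP hQ]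
  calc ∑ v : {v : V // G.degree v = 1}, cutMax (descendants G r v) P Q
    _ = ∑ v ∈ pendants G, (cutSep {v} P + cutSep {v} Q) := by
      rw [Finset.sum_congr rfl fun v _ => cutMax_pendant v]
      exact (Finset.sum_subtype (pendants G) (fun v => mem_pendants)
        fun v => cutSep {v} P + cutSep {v} Q).symm
    _ = cutSide (pendants G) P + cutSide (pendants G) Q + 2 := by
      rw [Finset.sum_add_distrib, sum_cutSep_singleton _ hP, sum_cutSep_singleton _ hQ]
      ring

variable [DecidableEq V]

variable (G) in
/-- The functions on pairs whose squares enter the matrix `Max4PC` negatively, one for each internal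
vertex: the side function of the cut above `v` for `v ≠ r`, and a shifted side function of the set
of pendant vertices for `v = r`. The cut above the root is trivial, so its slot is used for what the
other slots leave over, the contributions of the pendant vertices and a constant; the shift is
chosen so that these are a difference of two squares. -/
noncomputable def negForm : {v : V // G.degree v ≠ 1} → Sym2 V → ℚ :=
  Function.update (fun v => cutSide (descendants G r v)) r fun P =>
    cutSide (pendants G) P + Fintype.card {v : V // G.degree v ≠ 1} / 2

variable (G) in
/-- The functions on pairs whose squares enter the matrix `Max4PC` positively, one for each internal
vertex: the separation indicator of the cut above `v` for `v ≠ r`, and `negForm G r r + 1` for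
`v = r`. -/
noncomputable def posForm : {v : V // G.degree v ≠ 1} → Sym2 V → ℚ :=
  Function.update (fun v => cutSep (descendants G r v)) r fun P =>
    cutSide (pendants G) P + Fintype.card {v : V // G.degree v ≠ 1} / 2 + 1

lemma posForm_mul_sub_negForm_mul (v : {v : V // G.degree v ≠ 1}) (P Q : Sym2 V) :
    posForm G r v P * posForm G r v Q - negForm G r v P * negForm G r v Q =
      cutMax (descendants G r v) P Q - 1 +
        if v = r then cutSide (pendants G) P + cutSide (pendants G) Q + 2 +
          Fintype.card {v : V // G.degree v ≠ 1} else 0 := by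
  by_cases hv : v = r
  · subst hv
    simp only [posForm, negForm, Function.update_self, descendants_root, cutMax_univ, if_true]
    ring
  · simp only [posForm, negForm, Function.update_of_ne hv, cutMax, if_neg hv]
    ring

theorem sum_cutMax_descendants (hG : G.IsTree) {P Q : Sym2 V} (hP : ¬ P.IsDiag)
    (hQ : ¬ Q.IsDiag) : ∑ v, cutMax (descendants G r v) P Q =
      ∑ v, (posForm G r v P * posForm G r v Q - negForm G r v P * negForm G r v Q) := by
  rw [← Fintype.sum_subtype_add_sum_subtype (fun v => G.degree v = 1),
    sum_pendant_cutMax_descendants r hG hP hQ]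
  simp only [posForm_mul_sub_negForm_mul, Finset.sum_add_distrib, Finset.sum_sub_distrib,
    Finset.sum_ite_eq', Finset.mem_univ, if_true, Finset.sum_const, Finset.card_univ, nsmul_eq_mul]
  ring

variable (G) in
/-- The vectors whose squares make up the matrix `Max4PC`: the functions `negForm G r v` and
`posForm G r v`, restricted to pairs of distinct vertices. -/
noncomputable def pairForm (i : {v : V // G.degree v ≠ 1} ⊕ {v : V // G.degree v ≠ 1})
    (P : {P : Sym2 V // ¬ P.IsDiag}) : ℚ :=
  Sum.elim (negForm G r) (posForm G r) i P

theorem max4Matrix_eq_sum_smul_vecMulVec (hG : G.IsTree) :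
    max4Matrix G = ∑ i, Sum.elim (fun _ => (-1 : ℚ)) (fun _ => 1) i •
      Matrix.vecMulVec (pairForm G r i) (pairForm G r i) := by
  ext P Q
  rw [max4Matrix, (isLaminar_descendants hG r).max4Sym2_eq_sum_cutMax
    (dist_eq_cutDist_descendants hG r), sum_cutMax_descendants r hG P.2 Q.2]
  simp only [pairForm, Fintype.sum_sum_type, Sum.elim_inl, Sum.elim_inr, Matrix.sum_apply,
    Matrix.smul_apply, Matrix.vecMulVec_apply, smul_eq_mul, Finset.sum_sub_distrib, neg_mul,
    one_mul, Finset.sum_neg_distrib]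
  ring

end Decomposition

section Independence

variable [Fintype V] [DecidableEq V] {G : SimpleGraph V} [DecidableRel G.Adj]
  {r : {v : V // G.degree v ≠ 1}} {a b : {v : V // G.degree v ≠ 1} → ℚ}

variable (r a b) in
/-- The part of the linear combination of the functions `negForm G r v` and `posForm G r v` with
coefficients `a v` and `b v` that is additive in the two vertices of a pair. -/
noncomputable def vertexPotential (x : V) : ℚ :=
  (a r + b r) * ((pendants G : Set V).indicator 1 x
      + (Fintype.card {v : V // G.degree v ≠ 1} / 2 - 1) / 2) + b r / 2
    + ∑ v ∈ Finset.univ.erase r, ((a v + b v) * (descendants G r v).indicator 1 x - a v / 2)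

lemma sum_mul_negForm_add_mul_posForm (x y : V) :
    ∑ v, (a v * negForm G r v s(x, y) + b v * posForm G r v s(x, y)) =
      vertexPotential r a b x + vertexPotential r a b y - ∑ v ∈ Finset.univ.erase r,
        2 * b v * ((descendants G r v).indicator 1 x * (descendants G r v).indicator 1 y) := by
  have term_of_ne (v) (hv : v ∈ Finset.univ.erase r) :
      a v * negForm G r v s(x, y) + b v * posForm G r v s(x, y) =
        ((a v + b v) * (descendants G r v).indicator 1 x - a v / 2)
          + ((a v + b v) * (descendants G r v).indicator 1 y - a v / 2)
          - 2 * b v * ((descendants G r v).indicator 1 x * (descendants G r v).indicator 1 y) := by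
    simp only [negForm, posForm, Function.update_of_ne (Finset.ne_of_mem_erase hv), cutSide_mk,
      cutSep_mk]
    ring
  rw [← Finset.add_sum_erase _ _ (Finset.mem_univ r), Finset.sum_congr rfl term_of_ne,
    Finset.sum_sub_distrib, Finset.sum_add_distrib]
  simp only [negForm, posForm, Function.update_self, cutSide_mk, vertexPotential]
  ring

lemma IsParent.vertexPotential_sub (hG : G.IsTree) {p : V} {v : {v : V // G.degree v ≠ 1}}
    (hp : IsParent G r p v) (hdeg : G.degree p ≠ 1) :
    vertexPotential r a b v - vertexPotential r a b p = a v + b v := by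
  have hvr : v ∈ Finset.univ.erase r :=
    Finset.mem_erase.mpr ⟨fun h => hp.ne_root (congrArg Subtype.val h), Finset.mem_univ v⟩
  have notMem_pendants (x : V) (hx : G.degree x ≠ 1) : x ∉ (pendants G : Set V) :=
    fun h => hx (mem_pendants.mp h)
  calc vertexPotential r a b v - vertexPotential r a b p
    _ = ∑ w ∈ Finset.univ.erase r, (a w + b w) *
        ((descendants G r w).indicator 1 v.1 - (descendants G r w).indicator 1 p) := by
      simp only [vertexPotential, Set.indicator_of_notMem (notMem_pendants v v.2),
        Set.indicator_of_notMem (notMem_pendants p hdeg), mul_sub, Finset.sum_sub_distrib]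
      ring
    _ = a v + b v := by
      simp only [hp.indicator_descendants_sub hG, Subtype.val_inj, mul_ite, mul_one, mul_zero,
        Finset.sum_ite_eq', if_pos hvr]

-- Take the mixed second difference along the edge above `v` and between a child of `v` and a vertex
-- outside the subtree of `v`: only the cut above `v` contributes.
lemma eq_zero_of_add_eq_sum_indicator_mul (hG : G.IsTree) {h : V → ℚ}
    {c : {v : V // G.degree v ≠ 1} → ℚ}
    (hh : ∀ x y, x ≠ y → h x + h y = ∑ v ∈ Finset.univ.erase r,
      c v * ((descendants G r v).indicator 1 x * (descendants G r v).indicator 1 y))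
    {v : {v : V // G.degree v ≠ 1}} (hv : v ≠ r) : c v = 0 := by
  have hv' : v.1 ≠ r := Subtype.coe_ne_coe.mpr hv
  obtain ⟨p, hp, hdeg⟩ := exists_isParent_degree_ne_one hG.connected r.2 hv'
  obtain ⟨child, hchild⟩ := exists_child_of_degree_ne_one hG v.2 hv'
  obtain ⟨u, hup, hu⟩ := hp.exists_ne_notMem_descendants hG hdeg
  have child_mem : child ∈ descendants G r v :=
    (hchild.mem_descendants_iff hG).mpr (Or.inr (self_mem_descendants G r v))
  have second_difference := sum_mul_sub_mul_sub_eq_zero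
    (χ := fun v : {v : V // G.degree v ≠ 1} => (descendants G r v).indicator 1) hh
    hchild.1.ne' (ne_of_mem_of_not_mem child_mem hp.notMem_descendants)
    (ne_of_mem_of_not_mem (self_mem_descendants G r v) hu).symm hup
  simpa only [hp.indicator_descendants_sub hG, Subtype.val_inj, mul_ite, mul_one, mul_zero,
    Finset.sum_ite_eq', Finset.mem_erase, ne_eq, hv, not_false_eq_true, Finset.mem_univ, and_self,
    if_true, Set.indicator_of_mem child_mem, Set.indicator_of_notMem hu, Pi.one_apply, sub_zero]
    using second_difference

lemma eq_zero_of_vertexPotential_eq_zero (hG : G.IsTree) [Nontrivial V]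
    (hpot : vertexPotential r a b = 0) (hb : ∀ v, v ≠ r → b v = 0) : a = 0 ∧ b = 0 := by
  have a_eq_zero (v) (hv : v ≠ r) : a v = 0 := by
    obtain ⟨p, hp, hdeg⟩ :=
      exists_isParent_degree_ne_one hG.connected r.2 (Subtype.coe_ne_coe.mpr hv)
    have difference := hp.vertexPotential_sub (a := a) (b := b) hG hdeg
    simpa only [hpot, Pi.zero_apply, sub_zero, hb v hv, add_zero, eq_comm] using difference
  have sum_eq_zero (x : V) : ∑ v ∈ Finset.univ.erase r,
      ((a v + b v) * (descendants G r v).indicator 1 x - a v / 2) = 0 :=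
    Finset.sum_eq_zero fun v hv => by
      have hvr := Finset.ne_of_mem_erase hv
      rw [a_eq_zero v hvr, hb v hvr]
      ring
  obtain ⟨leaf, hleaf⟩ := hG.exists_vert_degree_one_of_nontrivial
  have pot_leaf := congrFun hpot leaf
  have pot_root := congrFun hpot r
  simp only [vertexPotential, sum_eq_zero, Pi.zero_apply, add_zero, Set.indicator_apply,
    Finset.mem_coe, mem_pendants, hleaf, r.2, if_true, if_false, Pi.one_apply] at pot_leaf pot_root
  have add_eq_zero : a r + b r = 0 := by linarith
  have b_root : b r = 0 := by
    rw [add_eq_zero] at pot_root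
    linarith
  have a_root : a r = 0 := by linarith
  constructor <;> funext v <;> by_cases hv : v = r
  · exact hv ▸ a_root
  · exact a_eq_zero v hv
  · exact hv ▸ b_root
  · exact hb v hv

theorem linearIndependent_pairForm (hG : G.IsTree) (hV : 3 ≤ Fintype.card V) :
    LinearIndependent ℚ (pairForm G r) := by
  rw [Fintype.linearIndependent_iff]
  intro coeff hcoeff
  set a := fun v => coeff (Sum.inl v)
  set b := fun v => coeff (Sum.inr v)
  have potential_add (x y : V) (hxy : x ≠ y) :
      vertexPotential r a b x + vertexPotential r a b y = ∑ v ∈ Finset.univ.erase r,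
        2 * b v * ((descendants G r v).indicator 1 x * (descendants G r v).indicator 1 y) := by
    rw [← sub_eq_zero, ← sum_mul_negForm_add_mul_posForm, Finset.sum_add_distrib]
    simpa [pairForm, Fintype.sum_sum_type] using congrFun hcoeff ⟨s(x, y), hxy⟩
  have b_eq_zero (v) (hv : v ≠ r) : b v = 0 := by
    simpa using eq_zero_of_add_eq_sum_indicator_mul hG potential_add hv
  have potential_eq_zero : vertexPotential r a b = 0 := by
    refine eq_zero_of_pairwise_add_eq_zero (by simpa using hV) fun x y hxy => ?_
    rw [potential_add x y hxy]
    refine Finset.sum_eq_zero fun v hv => ?_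
    rw [b_eq_zero v (Finset.ne_of_mem_erase hv)]
    ring
  have : Nontrivial V := Fintype.one_lt_card_iff_nontrivial.mp (by omega)
  obtain ⟨ha, hb⟩ := eq_zero_of_vertexPotential_eq_zero hG potential_eq_zero b_eq_zero
  rintro (v | v)
  · exact congrFun ha v
  · exact congrFun hb v

end Independence

/-- For a tree `T` on `n ≥ 3` vertices with `p` pendant vertices, the rank of the
matrix `Max4PC_T` over `ℚ` is `2(n - p)`. -/
theorem rank_max4Matrix {V : Type*} [Fintype V] [DecidableEq V] (G : SimpleGraph V)
    [DecidableRel G.Adj] (hT : G.IsTree) (n p : ℕ)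
    (hn : Fintype.card V = n) (hn3 : 3 ≤ n)
    (hp : (Finset.univ.filter fun v : V => G.degree v = 1).card = p) :
    (max4Matrix G).rank = 2 * (n - p) := by
  have hV : 3 ≤ Fintype.card V := hn ▸ hn3
  obtain ⟨r, hr⟩ := exists_degree_ne_one hT (by omega)
  have card_internal : Fintype.card {v : V // G.degree v ≠ 1} = n - p := by
    rw [Fintype.card_subtype_compl, Fintype.card_subtype, hn, hp]
  have coeff_ne_zero (i : {v : V // G.degree v ≠ 1} ⊕ {v : V // G.degree v ≠ 1}) :
      Sum.elim (fun _ => (-1 : ℚ)) (fun _ => 1) i ≠ 0 := by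
    cases i <;> simp
  rw [rank_eq_card_of_eq_sum_smul_vecMulVec (linearIndependent_pairForm hT hV) coeff_ne_zero
    (max4Matrix_eq_sum_smul_vecMulVec ⟨r, hr⟩ hT), Fintype.card_sum, card_internal, two_mul]
end

section
/- Let T be a tree on n ≥ 3 vertices with exactly p pendant vertices. Then, viewing Max4PC_T as an integer matrix of size binom(n,2) × binom(n,2), there exist integer matrices U and V of size binom(n,2) × binom(n,2), each invertible over the integers (determinant ±1), such that U · Max4PC_T · V is a diagonal matrix whose multiset of diagonal entries consists of the value 0 with multiplicity binom(n,2) − 2(n − p), the value 1 with multiplicity 2, and the value 2 with multiplicity 2(n − p − 1). That is, the invariant factors of Max4PC_T are 0 (binom(n,2) − 2(n−p) times), 1, 1, and 2 (2(n−p−1) times). -/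
open SimpleGraph

variable {V : Type*}

/-- The matrix `Max4PC_T` as an integer matrix, with rows and columns indexed
by the 2-element subsets of the vertex set (non-diagonal elements of `Sym2 V`). -/
noncomputable def max4MatrixZ [Fintype V] [DecidableEq V] (G : SimpleGraph V) :
    Matrix {s : Sym2 V // ¬ s.IsDiag} {s : Sym2 V // ¬ s.IsDiag} ℤ :=
  fun p q => (max4Sym2 G p.1 q.1 : ℤ)

/-!
For a dart `d` of a tree `T` let `τ_d` be the indicator function of the component of `T - d` that
contains the tail of `d`, and let `-d` be the reversed dart. Counting the edges on the path from
`x` to `y` gives `dist(x, y) = ∑_d τ_d(x) τ_{-d}(y)`, and comparing the three four-point sums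
through this formula gives `max4 w x y z = dist(w, x) + dist(y, z) + 2 s`, where `s` is the number
of edges separating `{w, x}` from `{y, z}`. A pendant edge never separates two pairs, so only the
darts between non-pendant vertices contribute to `s = ∑_d τ_d(w) τ_d(x) τ_{-d}(y) τ_{-d}(z)`.

Hence `Max4PC = X D Yᵀ`, where the row of `X` at `{x, y}` consists of `1`, `dist(x, y)` and the
products `τ_d(x) τ_d(y)`, the matrix `Y` is `X` with permuted columns, and `D` is diagonal with
entries `1` (twice) and `2` (once per inner dart). The rows of `X` span the whole lattice: moving
`y` along a dart `d` away from `x` changes the row by `e_dist - e_d`, or by `e_dist` alone if `d`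
points to a leaf. Since two surjections between the same free `ℤ`-modules differ by an
automorphism of the source, `X` and `Y` can be completed to invertible matrices, and `Max4PC` is
equivalent to `D` padded with zeros.
-/

namespace Max4PC

section SurjectiveMaps

theorem exists_linearEquiv_ker_prod {R M N : Type*} [Ring R] [AddCommGroup M] [Module R M]
    [AddCommGroup N] [Module R N] [Module.Projective R N] {f : M →ₗ[R] N}
    (hf : Function.Surjective f) :
    ∃ e : M ≃ₗ[R] LinearMap.ker f × N, ∀ x, (e x).2 = f x := by
  obtain ⟨g, hg⟩ := Module.projective_lifting_property f LinearMap.id hf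
  obtain ⟨e, -, he⟩ := f.exact_subtype_ker_map.splitSurjectiveEquiv
    (LinearMap.ker f).injective_subtype ⟨g, hg⟩
  exact ⟨e, fun x => (LinearMap.congr_fun he x).symm⟩

variable {R : Type*} [CommRing R] [IsDomain R] [IsPrincipalIdealRing R]

theorem exists_linearEquiv_comp_eq {M N : Type*} [AddCommGroup M] [Module R M] [Module.Free R M]
    [Module.Finite R M] [AddCommGroup N] [Module R N] [Module.Projective R N] {f g : M →ₗ[R] N}
    (hf : Function.Surjective f) (hg : Function.Surjective g) :
    ∃ e : M ≃ₗ[R] M, f ∘ₗ e = g := by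
  have finrank_ker {h : M →ₗ[R] N} (hh : Function.Surjective h) :
      Module.finrank R N + Module.finrank R (LinearMap.ker h) = Module.finrank R M := by
    rw [← (h.quotKerEquivOfSurjective hh).finrank_eq, Submodule.finrank_quotient_add_finrank]
  obtain ⟨ef, hef⟩ := exists_linearEquiv_ker_prod hf
  obtain ⟨eg, heg⟩ := exists_linearEquiv_ker_prod hg
  let kerEquiv : LinearMap.ker g ≃ₗ[R] LinearMap.ker f :=
    LinearEquiv.ofFinrankEq _ _ (by have := finrank_ker hf; have := finrank_ker hg; omega)
  refine ⟨eg ≪≫ₗ kerEquiv.prodCongr (.refl R N) ≪≫ₗ ef.symm, LinearMap.ext fun x => ?_⟩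
  calc f (ef.symm (kerEquiv (eg x).1, (eg x).2)) = (eg x).2 := by
        rw [← hef, LinearEquiv.apply_symm_apply]
    _ = g x := heg x

theorem exists_isUnit_det_mul_eq {S K : Type*} [Fintype S] [DecidableEq S] [Finite K]
    {A B : Matrix K S R} (hA : Function.Surjective A.mulVec) (hB : Function.Surjective B.mulVec) :
    ∃ P : Matrix S S R, IsUnit P.det ∧ A * P = B := by
  obtain ⟨e, he⟩ := exists_linearEquiv_comp_eq (f := A.mulVecLin) (g := B.mulVecLin) hA hB
  refine ⟨LinearMap.toMatrix' e, ?_, ?_⟩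
  · rw [LinearMap.det_toMatrix']
    exact e.isUnit_det'
  · apply Matrix.toLin'.injective
    rw [Matrix.toLin'_mul, Matrix.toLin'_toMatrix']
    exact he

end SurjectiveMaps

section DiagonalExtension

variable {R S K : Type*}

theorem submatrix_mulVec_surjective {L : Type*} [NonUnitalNonAssocSemiring R] [Fintype S]
    {A : Matrix K S R} (hA : Function.Surjective A.mulVec) {f : L → K}
    (hf : Function.Injective f) : Function.Surjective (A.submatrix f id).mulVec := fun v => by
  obtain ⟨u, hu⟩ := hA (Function.extend f v 0)
  refine ⟨u, funext fun l => ?_⟩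
  change A.mulVec u (f l) = v l
  rw [hu, hf.extend_apply]

theorem one_submatrix_mulVec_surjective [NonAssocSemiring R] [Fintype S] [DecidableEq S]
    (ι : K ↪ S) : Function.Surjective ((1 : Matrix S S R).submatrix ι id).mulVec :=
  submatrix_mulVec_surjective (fun v => ⟨v, Matrix.one_mulVec v⟩) ι.injective

theorem transpose_one_submatrix_mul_diagonal_mul [NonAssocSemiring R] [DecidableEq S] [Fintype K]
    [DecidableEq K] (ι : K ↪ S) (c : K → R) :
    ((1 : Matrix S S R).submatrix ι id).transpose * Matrix.diagonal c *
      (1 : Matrix S S R).submatrix ι id = Matrix.diagonal (Function.extend ι c 0) := by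
  ext s t
  rw [Matrix.mul_apply]
  simp only [Matrix.mul_diagonal, Matrix.transpose_apply, Matrix.submatrix_apply,
    id_eq, Matrix.one_apply, Matrix.diagonal_apply, ite_mul, one_mul, zero_mul]
  by_cases hs : ∃ k, ι k = s
  · obtain ⟨k, rfl⟩ := hs
    simp [ι.injective.extend_apply]
  · have hne : ∀ k, ι k ≠ s := fun k hk => hs ⟨k, hk⟩
    simp [hne]

variable [Zero R] [DecidableEq R] [Fintype S] [Fintype K]

theorem card_filter_extend_eq (ι : K ↪ S) (c : K → R) {z : R} (hz : z ≠ 0) :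
    (Finset.univ.filter fun s => Function.extend ι c 0 s = z).card =
      (Finset.univ.filter fun k => c k = z).card := by
  rw [← Finset.card_map ι]
  congr 1
  ext s
  simp only [Finset.mem_filter, Finset.mem_univ, true_and, Finset.mem_map]
  by_cases hs : ∃ k, ι k = s
  · obtain ⟨k, rfl⟩ := hs
    simp [ι.injective.extend_apply]
  · rw [Function.extend_apply' _ _ _ hs]
    exact iff_of_false hz.symm fun ⟨k, _, hk⟩ => hs ⟨k, hk⟩

theorem card_filter_extend_eq_zero (ι : K ↪ S) {c : K → R} (hc : ∀ k, c k ≠ 0) :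
    (Finset.univ.filter fun s => Function.extend ι c 0 s = 0).card =
      Fintype.card S - Fintype.card K := by
  classical
  rw [← Finset.card_univ (α := K), ← Finset.card_map ι, ← Finset.card_compl]
  congr 1
  ext s
  by_cases hs : ∃ k, ι k = s
  · obtain ⟨k, rfl⟩ := hs
    simp [ι.injective.extend_apply, hc]
  · simpa [Function.extend_apply' _ _ _ hs] using hs

end DiagonalExtension

theorem exists_smith_of_eq_mul_diagonal_mul {R S K : Type*} [CommRing R] [IsDomain R]
    [IsPrincipalIdealRing R] [Fintype S] [DecidableEq S] [Fintype K] [DecidableEq K]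
    {A : Matrix S K R} {B : Matrix K S R} (hA : Function.Surjective A.transpose.mulVec)
    (hB : Function.Surjective B.mulVec) (c : K → R) :
    ∃ (ι : K ↪ S) (U W : Matrix S S R), IsUnit U.det ∧ IsUnit W.det ∧
      U * (A * Matrix.diagonal c * B) * W = Matrix.diagonal (Function.extend ι c 0) := by
  obtain ⟨ι⟩ : Nonempty (K ↪ S) :=
    Function.Embedding.nonempty_of_card_le (card_le_of_surjective R B.mulVecLin hB)
  obtain ⟨P, hP, hAP⟩ := exists_isUnit_det_mul_eq hA (one_submatrix_mulVec_surjective ι)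
  obtain ⟨W, hW, hBW⟩ := exists_isUnit_det_mul_eq hB (one_submatrix_mulVec_surjective ι)
  refine ⟨ι, P.transpose, W, by rwa [Matrix.det_transpose], hW, ?_⟩
  calc P.transpose * (A * Matrix.diagonal c * B) * W
      = (A.transpose * P).transpose * Matrix.diagonal c * (B * W) := by
        simp only [Matrix.transpose_mul, Matrix.transpose_transpose, Matrix.mul_assoc]
    _ = Matrix.diagonal (Function.extend ι c 0) := by
        rw [hAP, hBW, transpose_one_submatrix_mul_diagonal_mul]

theorem eq_top_of_single_mem {R K : Type*} [Ring R] [Finite K] [DecidableEq K]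
    {L : Submodule R (K → R)} {k₀ : K} (hL : ∀ k ≠ k₀, Pi.single k 1 ∈ L) {v : K → R} (hv : v ∈ L)
    (hv₀ : v k₀ = 1) : L = ⊤ := by
  have := Fintype.ofFinite K
  have mem_of_apply_eq_zero {f : K → R} (hf : f k₀ = 0) : f ∈ L := by
    rw [pi_eq_sum_univ' f]
    refine L.sum_mem fun k _ => ?_
    obtain rfl | hk := eq_or_ne k k₀
    · simp [hf]
    · exact L.smul_mem _ (hL k hk)
  refine eq_top_iff.2 fun f _ => ?_
  rw [← sub_add_cancel f (f k₀ • v)]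
  exact L.add_mem (mem_of_apply_eq_zero (by simp [hv₀])) (L.smul_mem _ hv)

section Distance

variable {G : SimpleGraph V} {u v w x y : V}

theorem dist_add_dist_of_mem_support {p : G.Walk x y} (hp : p.length = G.dist x y)
    (hw : w ∈ p.support) : G.dist x w + G.dist w y = G.dist x y := by
  obtain ⟨q, r, rfl⟩ := Walk.mem_support_iff_exists_append.1 hw
  rw [← length_eq_dist_of_subwalk hp (Walk.isSubwalk_of_append_left rfl),
    ← length_eq_dist_of_subwalk hp (Walk.isSubwalk_of_append_right rfl), ← hp, Walk.length_append]

/-- The geodesics from `x` to `u` and from `v` to `y` stay on their own sides of the edge `uv`, so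
joining them along this edge gives the path from `x` to `y`. -/
theorem dist_eq_of_adj_of_lt_of_lt (hT : G.IsTree) (huv : G.Adj u v)
    (hx : G.dist x u < G.dist x v) (hy : G.dist y v < G.dist y u) :
    G.dist x y = G.dist x u + 1 + G.dist v y := by
  obtain ⟨p, hp_path, hp⟩ := hT.connected.exists_path_of_dist x u
  obtain ⟨q, hq_path, hq⟩ := hT.connected.exists_path_of_dist v y
  have p_closer {w : V} (hw : w ∈ p.support) : G.dist w u < G.dist w v := by
    have := dist_add_dist_of_mem_support hp hw
    have := hT.connected.dist_triangle (u := x) (v := w) (w := v)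
    omega
  have q_closer {w : V} (hw : w ∈ q.support) : G.dist w v < G.dist w u := by
    have := dist_add_dist_of_mem_support hq hw
    have := hT.connected.dist_triangle (u := y) (v := w) (w := u)
    grind [G.dist_comm]
  have hpq_path : (p.append (.cons huv q)).IsPath := by
    rw [Walk.isPath_def, Walk.support_append, Walk.support_cons, List.tail_cons, List.nodup_append']
    exact ⟨hp_path.support_nodup, hq_path.support_nodup,
      fun w hwp hwq => (p_closer hwp).asymm (q_closer hwq)⟩
  obtain ⟨r, hr_path, hr⟩ := hT.connected.exists_path_of_dist x y
  have hr_eq : r = p.append (.cons huv q) :=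
    congrArg Subtype.val ((hT.isAcyclic.subsingleton_path x y).elim ⟨r, hr_path⟩ ⟨_, hpq_path⟩)
  rw [← hr, hr_eq, Walk.length_append, Walk.length_cons, hp, hq]
  ring

theorem dist_lt_of_adj_of_adj (hT : G.IsTree) (huv : G.Adj u v) (huw : G.Adj u w) (hvw : w ≠ v) :
    G.dist w u < G.dist w v := by
  have := hT.dist_eq_dist_add_one_of_adj w huv
  have := dist_eq_one_iff_adj.2 huw.symm
  have := hT.connected.pos_dist_of_ne hvw
  omega

section Leaf

variable [Fintype (G.neighborSet u)]

theorem dist_lt_of_degree_eq_one (hG : G.Connected) (hu : G.degree u = 1) (huv : G.Adj u v)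
    (hx : x ≠ u) : G.dist x v < G.dist x u := by
  obtain ⟨p, hp⟩ := hG.exists_walk_length_eq_dist u x
  cases p with
  | nil => exact absurd rfl hx
  | cons hadj q =>
    obtain rfl := (degree_eq_one_iff_existsUnique_adj.1 hu).unique huv hadj
    rw [G.dist_comm, G.dist_comm (u := x), ← hp, Walk.length_cons]
    exact Nat.lt_succ_of_le (dist_le q)

theorem exists_adj_ne_of_degree_ne_one (hu : G.degree u ≠ 1) (huv : G.Adj u v) :
    ∃ w, G.Adj u w ∧ w ≠ v := by
  have h_card : 1 < (G.neighborFinset u).card := by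
    have : 0 < G.degree u := (G.degree_pos_iff_exists_adj u).2 ⟨v, huv⟩
    rw [card_neighborFinset_eq_degree]
    omega
  obtain ⟨w, hw, hwv⟩ := Finset.exists_mem_ne h_card v
  exact ⟨w, (G.mem_neighborFinset u w).1 hw, hwv⟩

theorem degree_ne_one_of_adj [Fintype V] [Fintype (G.neighborSet v)] (hG : G.Connected)
    (hV : 2 < Fintype.card V) (hu : G.degree u = 1) (huv : G.Adj u v) : G.degree v ≠ 1 := by
  classical
  intro hv
  obtain ⟨x, -, hx⟩ := Finset.exists_mem_notMem_of_card_lt_card (s := {u, v}) (t := Finset.univ)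
    (Finset.card_le_two.trans_lt hV)
  rw [Finset.mem_insert, Finset.mem_singleton, not_or] at hx
  exact (dist_lt_of_degree_eq_one hG hu huv hx.1).asymm
    (dist_lt_of_degree_eq_one hG hv huv.symm hx.2)

end Leaf

end Distance

section TailSide

variable {G : SimpleGraph V}

/-- The indicator function of the side of the tail of the dart `d`: in a tree, the component
containing `d.fst` after the edge of `d` is deleted. -/
noncomputable def tailSide (d : G.Dart) (x : V) : ℤ :=
  if G.dist x d.fst < G.dist x d.snd then 1 else 0

theorem tailSide_nonneg (d : G.Dart) (x : V) : 0 ≤ tailSide d x := by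
  unfold tailSide
  split <;> decide

theorem tailSide_eq_one {d : G.Dart} {x : V} (hx : G.dist x d.fst < G.dist x d.snd) :
    tailSide d x = 1 :=
  if_pos hx

theorem tailSide_eq_zero {d : G.Dart} {x : V} (hx : G.dist x d.snd < G.dist x d.fst) :
    tailSide d x = 0 :=
  if_neg hx.asymm

theorem dist_lt_of_tailSide_ne_zero {d : G.Dart} {x : V} (hx : tailSide d x ≠ 0) :
    G.dist x d.fst < G.dist x d.snd :=
  of_not_not fun h => hx (if_neg h)

theorem tailSide_symm (hT : G.IsTree) (d : G.Dart) (x : V) :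
    tailSide d.symm x = 1 - tailSide d x := by
  simp only [tailSide, Dart.symm, Prod.fst_swap, Prod.snd_swap]
  have := hT.dist_eq_dist_add_one_of_adj x d.adj
  split_ifs <;> omega

theorem dist_fst_sub_dist_snd (hT : G.IsTree) (d : G.Dart) (x : V) :
    (G.dist x d.fst : ℤ) - G.dist x d.snd = tailSide d.symm x - tailSide d x := by
  rw [tailSide_symm hT, tailSide]
  have := hT.dist_eq_dist_add_one_of_adj x d.adj
  split_ifs <;> omega

theorem eq_of_tailSide_ne_zero (hT : G.IsTree) {d e : G.Dart} (hfst : tailSide e d.fst ≠ 0)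
    (hsnd : tailSide e.symm d.snd ≠ 0) : e = d := by
  have hdist := dist_eq_of_adj_of_lt_of_lt hT e.adj (dist_lt_of_tailSide_ne_zero hfst)
    (dist_lt_of_tailSide_ne_zero hsnd)
  rw [dist_eq_one_iff_adj.2 d.adj] at hdist
  ext
  · exact (hT.connected.dist_eq_zero_iff.1 (by omega)).symm
  · exact hT.connected.dist_eq_zero_iff.1 (by omega)

theorem tailSide_fst_mul_tailSide_symm_snd [DecidableEq V] (hT : G.IsTree) (d e : G.Dart) :
    tailSide e d.fst * tailSide e.symm d.snd = if e = d then 1 else 0 := by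
  have hadj := dist_eq_one_iff_adj.2 d.adj
  split_ifs with hed
  · subst hed
    rw [tailSide_eq_one (by simp [hadj]), tailSide_eq_one (by simp [G.dist_comm, hadj]), one_mul]
  · contrapose! hed
    exact eq_of_tailSide_ne_zero hT (left_ne_zero_of_mul hed) (right_ne_zero_of_mul hed)

theorem tailSide_fst_sub_tailSide_snd [DecidableEq V] (hT : G.IsTree) (d e : G.Dart) :
    tailSide e d.fst - tailSide e d.snd =
      (if e = d then 1 else 0) - if e = d.symm then 1 else 0 := by
  rw [← tailSide_fst_mul_tailSide_symm_snd hT, ← tailSide_fst_mul_tailSide_symm_snd hT d.symm,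
    tailSide_symm hT, tailSide_symm hT]
  simp only [Dart.symm, Prod.fst_swap, Prod.snd_swap]
  ring

variable [Fintype V] [DecidableRel G.Adj]

theorem sum_tailSide_mul_fst_sub_snd (hT : G.IsTree) (d : G.Dart) (x : V) :
    ∑ e : G.Dart, tailSide e x * (tailSide e d.fst - tailSide e d.snd) =
      G.dist x d.snd - G.dist x d.fst := by
  classical
  calc ∑ e : G.Dart, tailSide e x * (tailSide e d.fst - tailSide e d.snd)
      = tailSide d x - tailSide d.symm x := by
        simp [tailSide_fst_sub_tailSide_snd hT, mul_sub, Finset.sum_sub_distrib]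
    _ = G.dist x d.snd - G.dist x d.fst := by linarith [dist_fst_sub_dist_snd hT d x]

theorem dist_eq_sum_tailSide (hT : G.IsTree) (x y : V) :
    (G.dist x y : ℤ) = ∑ d : G.Dart, tailSide d x * tailSide d.symm y := by
  obtain ⟨p⟩ := hT.connected y x
  induction p with
  | @nil x =>
    rw [dist_self, Nat.cast_zero, eq_comm]
    refine Finset.sum_eq_zero fun d _ => ?_
    rw [tailSide_symm hT, tailSide]
    split <;> norm_num
  | @cons y z x hyz _ ih =>
    let d : G.Dart := ⟨(y, z), hyz⟩
    calc (G.dist x y : ℤ)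
        = G.dist x z - ∑ e : G.Dart, tailSide e x * (tailSide e d.fst - tailSide e d.snd) := by
          rw [sum_tailSide_mul_fst_sub_snd hT, sub_sub_cancel]
      _ = ∑ e : G.Dart, tailSide e x * tailSide e.symm y := by
          rw [ih, ← Finset.sum_sub_distrib]
          refine Finset.sum_congr rfl fun e _ => ?_
          rw [tailSide_symm hT, tailSide_symm hT]
          ring

end TailSide

section SplitCount

variable {G : SimpleGraph V} [Fintype V] [DecidableRel G.Adj]

theorem sum_dart_congr_of_add_symm {M : Type*} [AddCommMonoid M] [IsAddTorsionFree M]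
    {f g : G.Dart → M} (h : ∀ d, f d + f d.symm = g d + g d.symm) : ∑ d, f d = ∑ d, g d := by
  have two_nsmul_sum (f : G.Dart → M) : 2 • ∑ d, f d = ∑ d, (f d + f d.symm) := by
    rw [Finset.sum_add_distrib, two_nsmul, Dart.symm_involutive.bijective.sum_comp]
  refine nsmul_right_injective two_ne_zero ?_
  simp only [two_nsmul_sum, h]

/-- The number of edges of a tree separating `w` and `x` from `y` and `z`. -/
noncomputable def splitCount (G : SimpleGraph V) [DecidableRel G.Adj] (w x y z : V) : ℤ :=
  ∑ d : G.Dart, tailSide d w * tailSide d x * (tailSide d.symm y * tailSide d.symm z)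

theorem splitCount_nonneg (w x y z : V) : 0 ≤ splitCount G w x y z :=
  Finset.sum_nonneg fun d _ => mul_nonneg
    (mul_nonneg (tailSide_nonneg d w) (tailSide_nonneg d x))
    (mul_nonneg (tailSide_nonneg d.symm y) (tailSide_nonneg d.symm z))

theorem splitCount_comm_right (w x y z : V) : splitCount G w x y z = splitCount G w x z y :=
  Finset.sum_congr rfl fun _ _ => by ring

theorem dist_add_dist_sub_dist_add_dist (hT : G.IsTree) (w x y z : V) :
    (G.dist w y + G.dist x z : ℤ) - (G.dist w x + G.dist y z) =
      2 * splitCount G w x y z - 2 * splitCount G w y x z := by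
  simp only [dist_eq_sum_tailSide hT, splitCount, Finset.mul_sum, ← Finset.sum_add_distrib,
    ← Finset.sum_sub_distrib]
  refine sum_dart_congr_of_add_symm fun d => ?_
  simp only [Dart.symm_symm, tailSide_symm hT]
  ring

theorem dist_add_dist_lt_of_splitCount_ne_zero (hT : G.IsTree) {w x y z : V}
    (h : splitCount G w x y z ≠ 0) : G.dist w x + G.dist y z < G.dist w y + G.dist x z := by
  obtain ⟨d, -, hd⟩ := Finset.exists_ne_zero_of_sum_ne_zero h
  simp only [mul_ne_zero_iff] at hd
  obtain ⟨⟨hw, hx⟩, hy, hz⟩ := hd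
  have hwy := dist_eq_of_adj_of_lt_of_lt hT d.adj (dist_lt_of_tailSide_ne_zero hw)
    (dist_lt_of_tailSide_ne_zero hy)
  have hxz := dist_eq_of_adj_of_lt_of_lt hT d.adj (dist_lt_of_tailSide_ne_zero hx)
    (dist_lt_of_tailSide_ne_zero hz)
  have hwx := hT.connected.dist_triangle (u := w) (v := d.fst) (w := x)
  have hyz := hT.connected.dist_triangle (u := y) (v := d.snd) (w := z)
  rw [G.dist_comm (u := d.fst) (v := x)] at hwx
  rw [G.dist_comm (u := y) (v := d.snd)] at hyz
  omega

theorem splitCount_eq_zero_or (hT : G.IsTree) (w x y z : V) :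
    splitCount G w x y z = 0 ∨ splitCount G w y x z = 0 := by
  by_contra! h
  exact (dist_add_dist_lt_of_splitCount_ne_zero hT h.1).asymm
    (dist_add_dist_lt_of_splitCount_ne_zero hT h.2)

theorem max4_eq_add_two_mul_splitCount (hT : G.IsTree) (w x y z : V) :
    (max4 G w x y z : ℤ) = G.dist w x + G.dist y z + 2 * splitCount G w x y z := by
  have hy := dist_add_dist_sub_dist_add_dist hT w x y z
  have hz := dist_add_dist_sub_dist_add_dist hT w x z y
  have hy_zero := splitCount_eq_zero_or hT w x y z
  have hz_zero := splitCount_eq_zero_or hT w x z y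
  rw [← splitCount_comm_right w x y z, G.dist_comm (u := z) (v := y)] at hz
  rw [← splitCount_comm_right w x y z] at hz_zero
  have := splitCount_nonneg (G := G) w x y z
  have := splitCount_nonneg (G := G) w y x z
  have := splitCount_nonneg (G := G) w z x y
  unfold max4
  omega

end SplitCount

section Feature

variable {G : SimpleGraph V} [Fintype V] [DecidableRel G.Adj]

theorem tailSide_mul_tailSide_eq_zero (hG : G.Connected) {d : G.Dart} (hd : G.degree d.fst = 1)
    {x y : V} (hxy : x ≠ y) : tailSide d x * tailSide d y = 0 := by
  obtain rfl | hx := eq_or_ne x d.fst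
  · rw [tailSide_eq_zero (dist_lt_of_degree_eq_one hG hd d.adj hxy.symm), mul_zero]
  · rw [tailSide_eq_zero (dist_lt_of_degree_eq_one hG hd d.adj hx), zero_mul]

/-- The darts joining two non-pendant vertices. -/
abbrev InnerDart (G : SimpleGraph V) [DecidableRel G.Adj] : Type _ :=
  {d : G.Dart // G.degree d.fst ≠ 1 ∧ G.degree d.snd ≠ 1}

theorem splitCount_eq_sum_innerDart (hG : G.Connected) {w x y z : V} (hwx : w ≠ x) (hyz : y ≠ z) :
    splitCount G w x y z = ∑ d : InnerDart G, tailSide d.1 w * tailSide d.1 x *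
      (tailSide d.1.symm y * tailSide d.1.symm z) := by
  rw [← Finset.sum_subtype (Finset.univ.filter fun d : G.Dart =>
      G.degree d.fst ≠ 1 ∧ G.degree d.snd ≠ 1) (by simp) fun d => tailSide d w * tailSide d x *
      (tailSide d.symm y * tailSide d.symm z), Finset.sum_filter_of_ne, splitCount]
  intro d _ hd
  constructor <;> contrapose! hd
  · rw [tailSide_mul_tailSide_eq_zero hG hd hwx, zero_mul]
  · rw [tailSide_mul_tailSide_eq_zero hG (d := d.symm) hd hyz, mul_zero]

/-- The coordinates of the pair `{x, y}`: the constant `1` (at `inl true`), the distance of `x` and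
`y` (at `inl false`), and, for each inner dart, whether both vertices lie on the side of its tail.
The Max4PC matrix is the Gram matrix of these vectors for a suitable bilinear form. -/
noncomputable def feature (x y : V) : Bool ⊕ InnerDart G → ℤ :=
  Sum.elim (fun b => cond b 1 (G.dist x y : ℤ)) fun d => tailSide d.1 x * tailSide d.1 y

theorem feature_comm (x y : V) : feature (G := G) x y = feature y x := by
  simp only [feature, G.dist_comm, mul_comm]

/-- The matrix whose row at `{x, y}` is `feature x y`. -/
noncomputable def featureMatrix (G : SimpleGraph V) [DecidableRel G.Adj] :
    Matrix {s : Sym2 V // ¬ s.IsDiag} (Bool ⊕ InnerDart G) ℤ :=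
  Matrix.of fun s => Sym2.lift ⟨feature, feature_comm⟩ s.1

/-- The involution of the feature coordinates exchanging the constant with the distance and each
inner dart with its reverse. -/
def featureSwap (G : SimpleGraph V) [DecidableRel G.Adj] : Equiv.Perm (Bool ⊕ InnerDart G) :=
  Equiv.sumCongr Equiv.boolNot <|
    Function.Involutive.toPerm (fun d => ⟨d.1.symm, d.2.2, d.2.1⟩) fun d =>
      Subtype.ext d.1.symm_symm

theorem feature_featureSwap_inr (x y : V) (d : InnerDart G) :
    feature x y (featureSwap G (Sum.inr d)) = tailSide d.1.symm x * tailSide d.1.symm y :=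
  rfl

/-- The nonzero invariant factors of the Max4PC matrix. -/
def featureCoeff (G : SimpleGraph V) [DecidableRel G.Adj] : Bool ⊕ InnerDart G → ℤ :=
  Sum.elim (fun _ => 1) fun _ => 2

theorem featureCoeff_ne_zero (k : Bool ⊕ InnerDart G) : featureCoeff G k ≠ 0 := by
  cases k <;> simp [featureCoeff]

theorem max4_eq_sum_feature (hT : G.IsTree) {w x y z : V} (hwx : w ≠ x) (hyz : y ≠ z) :
    (max4 G w x y z : ℤ) =
      ∑ k, feature w x k * featureCoeff G k * feature y z (featureSwap G k) := by
  rw [max4_eq_add_two_mul_splitCount hT, splitCount_eq_sum_innerDart hT.connected hwx hyz,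
    Fintype.sum_sum_type, Fintype.sum_bool, Finset.mul_sum]
  congr 1
  · simp [feature, featureCoeff, featureSwap, add_comm]
  · refine Finset.sum_congr rfl fun d _ => ?_
    rw [feature_featureSwap_inr, feature, featureCoeff, Sum.elim_inr, Sum.elim_inr]
    ring

theorem max4MatrixZ_eq_mul_diagonal_mul [DecidableEq V] (hT : G.IsTree) :
    max4MatrixZ G = featureMatrix G * Matrix.diagonal (featureCoeff G) *
      ((featureMatrix G).submatrix id (featureSwap G)).transpose := by
  ext ⟨s, hs⟩ ⟨t, ht⟩
  induction s with | _ w x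
  induction t with | _ y z
  rw [Matrix.mul_apply]
  simp only [Matrix.mul_diagonal]
  exact max4_eq_sum_feature hT hs ht

end Feature

section Surjectivity

variable {G : SimpleGraph V} [Fintype V] [DecidableEq V] [DecidableRel G.Adj]

/-- The change of the coordinates of a pair when one of its vertices moves along the dart `d`, away
from the other. -/
def featureStep (d : G.Dart) : Bool ⊕ InnerDart G → ℤ :=
  Sum.elim (fun b => cond b 0 1) fun e => if e.1 = d then -1 else 0

theorem feature_snd_sub_feature_fst (hT : G.IsTree) {d : G.Dart} {x : V}
    (hx : G.dist x d.fst < G.dist x d.snd) :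
    feature d.snd x - feature d.fst x = featureStep d := by
  have tailSide_d : tailSide d x = 1 := tailSide_eq_one hx
  have tailSide_d_symm : tailSide d.symm x = 0 := tailSide_eq_zero hx
  ext (b | e)
  · have := dist_fst_sub_dist_snd hT d x
    cases b
    · simp only [Pi.sub_apply, feature, featureStep, Sum.elim_inl, cond_false]
      grind [G.dist_comm]
    · rfl
  · have := tailSide_fst_sub_tailSide_snd hT d e.1
    simp only [Pi.sub_apply, feature, featureStep, Sum.elim_inr]
    grind [Dart.symm_ne]

theorem featureStep_eq_single {d : G.Dart} (hd : G.degree d.snd = 1) :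
    featureStep d = Pi.single (Sum.inl false) 1 := by
  ext (b | e)
  · cases b <;> rfl
  · exact if_neg fun (hed : e.1 = d) => e.2.2 (hed ▸ hd)

theorem featureStep_coe (d : InnerDart G) :
    featureStep d.1 = Pi.single (Sum.inl false) 1 - Pi.single (Sum.inr d) 1 := by
  ext (b | e)
  · cases b <;> rfl
  · by_cases hed : e = d <;> simp [featureStep, ← Subtype.ext_iff, hed]

theorem feature_mem_range {x y : V} (hxy : x ≠ y) :
    feature x y ∈ LinearMap.range (featureMatrix G).transpose.mulVecLin :=
  ⟨Pi.single ⟨s(x, y), hxy⟩ 1, Matrix.mulVec_single_one _ _⟩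

theorem featureStep_mem_range (hT : G.IsTree) {d : G.Dart} (hd : G.degree d.fst ≠ 1) :
    featureStep d ∈ LinearMap.range (featureMatrix G).transpose.mulVecLin := by
  obtain ⟨x, hx_adj, hx_ne⟩ := exists_adj_ne_of_degree_ne_one hd d.adj
  rw [← feature_snd_sub_feature_fst hT (dist_lt_of_adj_of_adj hT d.adj hx_adj hx_ne)]
  exact sub_mem (feature_mem_range hx_ne.symm) (feature_mem_range hx_adj.ne)

theorem single_inl_false_mem_range (hT : G.IsTree) (hV : 2 < Fintype.card V) :
    Pi.single (Sum.inl false) 1 ∈ LinearMap.range (featureMatrix G).transpose.mulVecLin := by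
  have : Nontrivial V := Fintype.one_lt_card_iff_nontrivial.1 (by omega)
  obtain ⟨v, hv⟩ := hT.exists_vert_degree_one_of_nontrivial
  obtain ⟨u, huv, -⟩ := degree_eq_one_iff_existsUnique_adj.1 hv
  rw [← featureStep_eq_single (d := ⟨(u, v), huv.symm⟩) hv]
  exact featureStep_mem_range hT (degree_ne_one_of_adj hT.connected hV hv huv)

theorem transpose_featureMatrix_mulVec_surjective (hT : G.IsTree) (hV : 2 < Fintype.card V) :
    Function.Surjective (featureMatrix G).transpose.mulVec := by
  have dist_mem := single_inl_false_mem_range hT hV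
  obtain ⟨x, y, hxy⟩ := Fintype.exists_pair_of_one_lt_card (one_lt_two.trans hV)
  refine LinearMap.range_eq_top.1 (eq_top_of_single_mem (k₀ := Sum.inl true) ?_
    (feature_mem_range hxy) rfl)
  rintro ((_ | _) | d) hk
  · exact dist_mem
  · exact absurd rfl hk
  · rw [← sub_sub_cancel (Pi.single (Sum.inl false) 1) (Pi.single (Sum.inr d) 1),
      ← featureStep_coe]
    exact sub_mem dist_mem (featureStep_mem_range hT d.2.1)

end Surjectivity

section Count

variable {G : SimpleGraph V} [Fintype V] [DecidableRel G.Adj]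

theorem card_filter_dart_fst (P : V → Prop) [DecidablePred P] :
    (Finset.univ.filter fun d : G.Dart => P d.fst).card = ∑ v with P v, G.degree v := by
  classical
  rw [Finset.card_eq_sum_card_fiberwise (f := fun d : G.Dart => d.fst) (t := Finset.univ.filter P)
    fun d hd => by simpa using hd]
  refine Finset.sum_congr rfl fun v hv => ?_
  rw [← G.dart_fst_fiber_card_eq_degree v, Finset.filter_filter]
  congr 1
  ext d
  simp only [Finset.mem_filter, Finset.mem_univ, true_and] at hv ⊢
  grind

theorem card_filter_dart_snd (P : V → Prop) [DecidablePred P] :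
    (Finset.univ.filter fun d : G.Dart => P d.snd).card = ∑ v with P v, G.degree v := by
  rw [← card_filter_dart_fst]
  exact Finset.card_bijective Dart.symm Dart.symm_involutive.bijective (by simp [Dart.symm])

theorem card_innerDart_add (hT : G.IsTree) (hV : 2 < Fintype.card V) :
    Fintype.card (InnerDart G) + 2 * (Finset.univ.filter fun v : V => G.degree v = 1).card + 2 =
      2 * Fintype.card V := by
  classical
  have sum_degree : ∑ v with G.degree v = 1, G.degree v =
      (Finset.univ.filter fun v : V => G.degree v = 1).card := by
    rw [Finset.sum_congr rfl fun v hv => (Finset.mem_filter.1 hv).2, Finset.card_eq_sum_ones]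
  have card_pendant : (Finset.univ.filter fun d : G.Dart =>
      G.degree d.fst = 1 ∨ G.degree d.snd = 1).card =
        2 * (Finset.univ.filter fun v : V => G.degree v = 1).card := by
    rw [Finset.filter_or, Finset.card_union_of_disjoint, card_filter_dart_fst (G.degree · = 1),
      card_filter_dart_snd (G.degree · = 1), sum_degree, two_mul]
    exact Finset.disjoint_filter.2 fun d _ hd => degree_ne_one_of_adj hT.connected hV hd d.adj
  have card_inner : Fintype.card (InnerDart G) + (Finset.univ.filter fun d : G.Dart =>
      G.degree d.fst = 1 ∨ G.degree d.snd = 1).card = Fintype.card G.Dart := by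
    simp only [Fintype.card_subtype, ← not_or]
    rw [add_comm, Finset.card_filter_add_card_filter_not, Finset.card_univ]
  have card_darts := G.dart_card_eq_twice_card_edges
  have card_edges := hT.card_edgeFinset
  omega

theorem card_filter_featureCoeff_eq_one :
    (Finset.univ.filter fun k => featureCoeff G k = 1).card = 2 := by
  rw [Finset.card_filter, Fintype.sum_sum_type]
  simp [featureCoeff]

theorem card_filter_featureCoeff_eq_two :
    (Finset.univ.filter fun k => featureCoeff G k = 2).card = Fintype.card (InnerDart G) := by
  rw [Finset.card_filter, Fintype.sum_sum_type]
  simp [featureCoeff]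

end Count

end Max4PC

/-- Smith normal form of `Max4PC_T`: for a tree `T` on `n ≥ 3` vertices with `p`
pendant vertices, there are integer matrices `U, W`, invertible over `ℤ`, such that
`U * Max4PC_T * W` is diagonal, with diagonal entries `0` (with multiplicity
`C(n,2) - 2(n-p)`), `1` (with multiplicity `2`) and `2` (with multiplicity
`2(n-p-1)`). -/
theorem snf_max4Matrix {V : Type*} [Fintype V] [DecidableEq V] (G : SimpleGraph V)
    [DecidableRel G.Adj] (hT : G.IsTree) (n p : ℕ)
    (hn : Fintype.card V = n) (hn3 : 3 ≤ n)
    (hp : (Finset.univ.filter fun v : V => G.degree v = 1).card = p) :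
    ∃ (U W : Matrix {s : Sym2 V // ¬ s.IsDiag} {s : Sym2 V // ¬ s.IsDiag} ℤ)
      (d : {s : Sym2 V // ¬ s.IsDiag} → ℤ),
      IsUnit U.det ∧ IsUnit W.det ∧
      U * max4MatrixZ G * W = Matrix.diagonal d ∧
      (Finset.univ.filter fun s => d s = 0).card = Nat.choose n 2 - 2 * (n - p) ∧
      (Finset.univ.filter fun s => d s = 1).card = 2 ∧
      (Finset.univ.filter fun s => d s = 2).card = 2 * (n - p - 1) := by
  subst hn hp
  have hX := Max4PC.transpose_featureMatrix_mulVec_surjective hT hn3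
  obtain ⟨ι, U, W, hU, hW, hUW⟩ := Max4PC.exists_smith_of_eq_mul_diagonal_mul hX
    (Max4PC.submatrix_mulVec_surjective hX (Max4PC.featureSwap G).injective)
    (Max4PC.featureCoeff G)
  have card_inner := Max4PC.card_innerDart_add hT hn3
  refine ⟨U, W, _, hU, hW, Max4PC.max4MatrixZ_eq_mul_diagonal_mul hT ▸ hUW, ?_, ?_, ?_⟩
  · rw [Max4PC.card_filter_extend_eq_zero ι Max4PC.featureCoeff_ne_zero,
      Sym2.card_subtype_not_diag, Fintype.card_sum, Fintype.card_bool]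
    omega
  · rw [Max4PC.card_filter_extend_eq ι _ one_ne_zero, Max4PC.card_filter_featureCoeff_eq_one]
  · rw [Max4PC.card_filter_extend_eq ι _ two_ne_zero, Max4PC.card_filter_featureCoeff_eq_two]
    omega
end

section
/- Let T be a tree on n ≥ 3 vertices with exactly p pendant vertices. Viewing Max4PC_T as a real symmetric matrix, the number of positive eigenvalues of Max4PC_T (counted with multiplicity) is n − p, the number of negative eigenvalues is n − p, and the multiplicity of the eigenvalue 0 is binom(n,2) − 2(n − p). -/
open SimpleGraph

variable {V : Type*}

/-- The matrix `Max4PC_T` as a real matrix, with rows and columns indexed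
by the 2-element subsets of the vertex set (non-diagonal elements of `Sym2 V`). -/
noncomputable def max4MatrixR [Fintype V] [DecidableEq V] (G : SimpleGraph V) :
    Matrix {s : Sym2 V // ¬ s.IsDiag} {s : Sym2 V // ¬ s.IsDiag} ℝ :=
  fun p q => (max4Sym2 G p.1 q.1 : ℝ)

/-!
Every edge `e` of a tree cuts the vertex set in two sides. For pairs `P = {w, x}` and `Q = {y, z}`
let `cut_e(P)` tell whether `e` separates the two vertices of `P`, and `cross_e(P, Q)` whether `e`
separates `P` from `Q`. Then `cut_e(P) + cut_e(Q) + 2 cross_e(P, Q)` is the number of the four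
points on the side of `e` that contains fewer of them. Every pairing of the four points crosses `e`
at most that often, and because the cuts of a tree are compatible, one pairing attains this bound
for all edges at once. Summing over the edges,
`Max4PC(P, Q) = d(P) + d(Q) + 2 ∑ e, cross_e(P, Q)`.

Here `cross_e(P, Q) = in_e(P) out_e(Q) + out_e(P) in_e(Q)`, where `in_e` and `out_e` indicate that a
pair lies on the one or the other side of `e`; this vanishes for pendant `e`, one side of which is a
single vertex. So `Max4PC` is a sum of `1 + #(internal edges) = n - p` hyperbolic planes: one
spanned by the linear forms `1` and `d`, and one by `2 in_e` and `out_e` for each internal edge `e`.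
These `2 (n - p)` forms are linearly independent, and each plane contributes one positive and one
negative eigenvalue.
-/

section Signature

open Matrix QuadraticMap QuadraticForm

theorem sigPos_comp_of_surjective {K M M' : Type*} [Field K] [LinearOrder K]
    [AddCommGroup M] [Module K M] [FiniteDimensional K M]
    [AddCommGroup M'] [Module K M'] [FiniteDimensional K M']
    (Q : QuadraticForm K M') {f : M →ₗ[K] M'} (hf : Function.Surjective f) :
    sigPos (Q.comp f) = sigPos Q := by
  apply le_antisymm
  · obtain ⟨P, hP, hpos⟩ := exists_finrank_eq_sigPos_and_posDef (Q.comp f)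
    have f_ne_zero (x : P) (hx : x ≠ 0) : f x ≠ 0 := fun h ↦ by
      simpa [h] using hpos x hx
    have hinj : Function.Injective (f.domRestrict P) :=
      (injective_iff_map_eq_zero _).2 fun x ↦ not_imp_not.1 (f_ne_zero x)
    rw [← hP, ← LinearMap.finrank_range_of_inj hinj]
    refine le_sigPos_of_posDef Q ?_
    rintro ⟨_, x, rfl⟩ hx
    exact hpos x fun h ↦ hx (by simp [h])
  · obtain ⟨P, hP, hpos⟩ := exists_finrank_eq_sigPos_and_posDef Q
    obtain ⟨g, hg⟩ := f.exists_rightInverse_of_surjective (LinearMap.range_eq_top.2 hf)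
    have hfg (x : M') : f (g x) = x := LinearMap.congr_fun hg x
    have hinj : Function.Injective (g.domRestrict P) := fun x y h ↦
      Subtype.ext (Function.LeftInverse.injective hfg h)
    rw [← hP, ← LinearMap.finrank_range_of_inj hinj]
    refine le_sigPos_of_posDef (Q.comp f) ?_
    rintro ⟨_, x, rfl⟩ hx
    simpa [hfg] using hpos x fun h ↦ hx (by simp [h])

theorem sigNeg_comp_of_surjective {K M M' : Type*} [Field K] [LinearOrder K]
    [AddCommGroup M] [Module K M] [FiniteDimensional K M]
    [AddCommGroup M'] [Module K M'] [FiniteDimensional K M']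
    (Q : QuadraticForm K M') {f : M →ₗ[K] M'} (hf : Function.Surjective f) :
    sigNeg (Q.comp f) = sigNeg Q :=
  sigPos_comp_of_surjective (-Q) hf

theorem toQuadraticForm'_transpose_mul_diagonal_mul {R N ι : Type*} [CommRing R]
    [Fintype N] [DecidableEq N] [Fintype ι] [DecidableEq ι] (B : Matrix ι N R) (w : ι → R) :
    (Bᵀ * diagonal w * B).toQuadraticForm' = (weightedSumSquares R w).comp B.mulVecLin := by
  ext x
  have : x ⬝ᵥ (Bᵀ * diagonal w * B) *ᵥ x = (B *ᵥ x) ⬝ᵥ (diagonal w *ᵥ (B *ᵥ x)) := by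
    rw [← mulVec_mulVec, ← mulVec_mulVec, dotProduct_mulVec, vecMul_transpose]
  simpa [toQuadraticForm', toLinearMap₂'_apply', dotProduct, mulVec_diagonal, mul_left_comm]
    using this

variable {N ι : Type*} [Fintype N] [DecidableEq N] [Fintype ι] {A : Matrix N N ℝ}

theorem exists_eq_transpose_mul_diagonal_eigenvalues_mul (hA : A.IsHermitian) :
    ∃ B : Matrix N N ℝ, Function.Surjective B.mulVecLin ∧
      A = Bᵀ * diagonal hA.eigenvalues * B := by
  refine ⟨(hA.eigenvectorUnitary : Matrix N N ℝ)ᵀ, ?_, ?_⟩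
  · have : IsUnit (hA.eigenvectorUnitary : Matrix N N ℝ) := Unitary.isUnit_coe
    exact mulVec_surjective_iff_isUnit.2 ((isUnit_transpose _).2 this)
  · conv_lhs => rw [hA.spectral_theorem, Unitary.conjStarAlgAut_apply]
    simp [star_eq_conjTranspose]

theorem sigPos_toQuadraticForm'_transpose_mul_diagonal_mul [DecidableEq ι]
    (B : Matrix ι N ℝ) (w : ι → ℝ) (hB : Function.Surjective B.mulVecLin) :
    sigPos (Bᵀ * diagonal w * B).toQuadraticForm' = {i | 0 < w i}.ncard := by
  rw [toQuadraticForm'_transpose_mul_diagonal_mul, sigPos_comp_of_surjective _ hB,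
    sigPos_weightedSumSquares]

theorem sigNeg_toQuadraticForm'_transpose_mul_diagonal_mul [DecidableEq ι]
    (B : Matrix ι N ℝ) (w : ι → ℝ) (hB : Function.Surjective B.mulVecLin) :
    sigNeg (Bᵀ * diagonal w * B).toQuadraticForm' = {i | w i < 0}.ncard := by
  rw [toQuadraticForm'_transpose_mul_diagonal_mul, sigNeg_comp_of_surjective _ hB,
    sigNeg_weightedSumSquares]

theorem card_pos_roots_charpoly_eq_sigPos (hA : A.IsHermitian) :
    (A.charpoly.roots.filter (0 < ·)).card = sigPos A.toQuadraticForm' := by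
  obtain ⟨B, hB, hAB⟩ := exists_eq_transpose_mul_diagonal_eigenvalues_mul hA
  conv_rhs => rw [hAB, sigPos_toQuadraticForm'_transpose_mul_diagonal_mul _ _ hB]
  rw [hA.roots_charpoly_eq_eigenvalues, Multiset.filter_map, Multiset.card_map,
    Set.ncard_eq_toFinset_card', Set.toFinset_ofPred]
  rfl

theorem card_neg_roots_charpoly_eq_sigNeg (hA : A.IsHermitian) :
    (A.charpoly.roots.filter (· < 0)).card = sigNeg A.toQuadraticForm' := by
  obtain ⟨B, hB, hAB⟩ := exists_eq_transpose_mul_diagonal_eigenvalues_mul hA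
  conv_rhs => rw [hAB, sigNeg_toQuadraticForm'_transpose_mul_diagonal_mul _ _ hB]
  rw [hA.roots_charpoly_eq_eigenvalues, Multiset.filter_map, Multiset.card_map,
    Set.ncard_eq_toFinset_card', Set.toFinset_ofPred]
  rfl

theorem multiset_card_eq_card_pos_add_card_neg_add_count_zero {α : Type*} [LinearOrder α] [Zero α]
    (s : Multiset α) :
    s.card = (s.filter (0 < ·)).card + (s.filter (· < 0)).card + s.count 0 := by
  simp only [← Multiset.countP_eq_card_filter, Multiset.count]
  induction s using Multiset.induction with
  | empty => simp
  | cons a s ih =>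
    rw [Multiset.card_cons, ih]
    simp only [Multiset.countP_cons]
    rcases lt_trichotomy a 0 with h | rfl | h
    · simp only [h, h.not_gt, h.ne', if_true, if_false]
      omega
    · simp only [lt_irrefl, if_true, if_false]
      omega
    · simp only [h, h.not_gt, h.ne, if_true, if_false]
      omega

theorem surjective_mulVecLin_of_linearIndependent_row {K N ι : Type*} [Field K] [Fintype N]
    [Finite ι] {B : Matrix ι N K} (hB : LinearIndependent K B.row) :
    Function.Surjective B.mulVecLin := by
  have := Fintype.ofFinite ι
  refine LinearMap.range_eq_top.1 (Submodule.eq_top_of_finrank_eq ?_)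
  rw [Module.finrank_fintype_fun_eq_card]
  exact hB.rank_matrix

theorem transpose_mul_add_transpose_mul_eq {K N ι : Type*} [Field K] [NeZero (2 : K)]
    [Fintype ι] [DecidableEq ι] (U W : Matrix ι N K) :
    Uᵀ * W + Wᵀ * U = (fromRows (U + W) (U - W))ᵀ *
      diagonal (Sum.elim (fun _ : ι ↦ (1 / 2 : K)) (fun _ : ι ↦ -(1 / 2))) *
        fromRows (U + W) (U - W) := by
  ext s t
  rw [mul_apply]
  simp only [mul_diagonal]
  simp only [Matrix.add_apply, mul_apply, transpose_apply, Fintype.sum_sum_type,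
    fromRows_apply_inl, fromRows_apply_inr, Matrix.sub_apply, Sum.elim_inl, Sum.elim_inr,
    ← Finset.sum_add_distrib]
  refine Finset.sum_congr rfl fun i _ ↦ ?_
  field [NeZero.ne (2 : K)]

theorem surjective_mulVecLin_fromRows_add_sub {K N ι : Type*} [Field K] [NeZero (2 : K)]
    [Fintype N] {U W : Matrix ι N K} (h : Function.Surjective (fromRows U W).mulVecLin) :
    Function.Surjective (fromRows (U + W) (U - W)).mulVecLin := by
  intro y
  obtain ⟨x, hx⟩ := h (Sum.elim (fun i ↦ (y (.inl i) + y (.inr i)) / 2)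
    (fun i ↦ (y (.inl i) - y (.inr i)) / 2))
  rw [mulVecLin_apply, fromRows_mulVec, Sum.elim_eq_iff] at hx
  refine ⟨x, ?_⟩
  rw [mulVecLin_apply, fromRows_mulVec, add_mulVec, sub_mulVec, hx.1, hx.2]
  ext (i | i)
  · simp only [Sum.elim_inl, Pi.add_apply]
    field [NeZero.ne (2 : K)]
  · simp only [Sum.elim_inr, Pi.sub_apply]
    field [NeZero.ne (2 : K)]

theorem inertia_transpose_mul_add_transpose_mul {U W : Matrix ι N ℝ}
    (hA : A = Uᵀ * W + Wᵀ * U) (hUW : LinearIndependent ℝ (fromRows U W).row) :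
    (A.charpoly.roots.filter (0 < ·)).card = Fintype.card ι ∧
    (A.charpoly.roots.filter (· < 0)).card = Fintype.card ι ∧
    A.charpoly.roots.count 0 + 2 * Fintype.card ι = Fintype.card N := by
  classical
  have hermitian : A.IsHermitian := by simp [hA, IsHermitian, add_comm]
  have surjective := surjective_mulVecLin_fromRows_add_sub
    (surjective_mulVecLin_of_linearIndependent_row hUW)
  have hpos : (A.charpoly.roots.filter (0 < ·)).card = Fintype.card ι := by
    rw [card_pos_roots_charpoly_eq_sigPos hermitian, hA, transpose_mul_add_transpose_mul_eq,
      sigPos_toQuadraticForm'_transpose_mul_diagonal_mul _ _ surjective]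
    have : {i : ι ⊕ ι | 0 < Sum.elim (fun _ ↦ (1 / 2 : ℝ)) (fun _ ↦ -(1 / 2)) i} =
        Set.range Sum.inl := by ext (i | i) <;> simp
    rw [this, Set.ncard_range_of_injective Sum.inl_injective, Nat.card_eq_fintype_card]
  have hneg : (A.charpoly.roots.filter (· < 0)).card = Fintype.card ι := by
    rw [card_neg_roots_charpoly_eq_sigNeg hermitian, hA, transpose_mul_add_transpose_mul_eq,
      sigNeg_toQuadraticForm'_transpose_mul_diagonal_mul _ _ surjective]
    have : {i : ι ⊕ ι | Sum.elim (fun _ ↦ (1 / 2 : ℝ)) (fun _ ↦ -(1 / 2)) i < 0} =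
        Set.range Sum.inr := by ext (i | i) <;> simp
    rw [this, Set.ncard_range_of_injective Sum.inr_injective, Nat.card_eq_fintype_card]
  refine ⟨hpos, hneg, ?_⟩
  have hcard : A.charpoly.roots.card = Fintype.card N := by
    rw [← hermitian.splits_charpoly.natDegree_eq_card_roots, charpoly_natDegree_eq_dim]
  have := multiset_card_eq_card_pos_add_card_neg_add_count_zero A.charpoly.roots
  omega

end Signature

section EdgeSides

variable {G : SimpleGraph V}

open Classical in
/-- The `0`-`1` indicator of one of the two sides of a bridge `e`: the component of `G - e`
containing `e.out.1`. Which endpoint of `e` is selected is immaterial. -/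
noncomputable def sideIndicator (G : SimpleGraph V) (e : Sym2 V) (v : V) : ℝ :=
  if (G.deleteEdges {e}).Reachable e.out.1 v then 1 else 0

theorem sideIndicator_eq_zero_or_one (e : Sym2 V) (v : V) :
    sideIndicator G e v = 0 ∨ sideIndicator G e v = 1 := by
  classical exact (ite_eq_or_eq _ _ _).symm

theorem sideIndicator_eq_of_notMem_edges {e : Sym2 V} {u v : V} (p : G.Walk u v)
    (he : e ∉ p.edges) : sideIndicator G e u = sideIndicator G e v := by
  have huv : (G.deleteEdges {e}).Reachable u v := (p.toDeleteEdge e he).reachable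
  have : (G.deleteEdges {e}).Reachable e.out.1 u ↔ (G.deleteEdges {e}).Reachable e.out.1 v :=
    ⟨fun h ↦ h.trans huv, fun h ↦ h.trans huv.symm⟩
  classical exact if_congr this rfl rfl

theorem sideIndicator_eq_of_adj_of_ne {e : Sym2 V} {u v : V} (h : G.Adj u v) (he : e ≠ s(u, v)) :
    sideIndicator G e u = sideIndicator G e v :=
  sideIndicator_eq_of_notMem_edges h.toWalk (by simpa using he)

theorem sideIndicator_add_of_adj (hG : G.IsAcyclic) {u v : V} (h : G.Adj u v) :
    sideIndicator G s(u, v) u + sideIndicator G s(u, v) v = 1 := by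
  have huv : ¬ (G.deleteEdges {s(u, v)}).Reachable u v :=
    isAcyclic_iff_forall_adj_isBridge.1 hG h
  have hvu : ¬ (G.deleteEdges {s(u, v)}).Reachable v u := fun h ↦ huv h.symm
  have hout : s(u, v).out.1 = u ∨ s(u, v).out.1 = v := by
    simpa using Sym2.out_fst_mem s(u, v)
  rcases hout with hout | hout <;> simp [sideIndicator, hout, huv, hvu]

theorem sideIndicator_add_of_mem_edges (hG : G.IsAcyclic) {e : Sym2 V} {u v : V}
    {p : G.Walk u v} (hp : p.IsTrail) (he : e ∈ p.edges) :
    sideIndicator G e u + sideIndicator G e v = 1 := by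
  induction p with
  | nil => simp at he
  | @cons a b c hab q ih =>
    rw [Walk.isTrail_cons] at hp
    rw [Walk.edges_cons, List.mem_cons] at he
    by_cases hne : e = s(a, b)
    · subst hne
      rw [← sideIndicator_eq_of_notMem_edges q hp.2, sideIndicator_add_of_adj hG hab]
    · rw [sideIndicator_eq_of_adj_of_ne hab hne, ih hp.1 (he.resolve_left hne)]

theorem mem_edges_iff_sideIndicator_ne (hG : G.IsAcyclic) {e : Sym2 V} {u v : V}
    {p : G.Walk u v} (hp : p.IsTrail) :
    e ∈ p.edges ↔ sideIndicator G e u ≠ sideIndicator G e v := by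
  refine ⟨fun he h ↦ ?_, not_imp_comm.1 (sideIndicator_eq_of_notMem_edges p)⟩
  have := sideIndicator_add_of_mem_edges hG hp he
  rcases sideIndicator_eq_zero_or_one (G := G) e u with hu | hu <;> rw [← h, hu] at this <;>
    norm_num at this

theorem sideIndicator_ne_of_adj (hG : G.IsAcyclic) {u v : V} (h : G.Adj u v) :
    sideIndicator G s(u, v) u ≠ sideIndicator G s(u, v) v :=
  (mem_edges_iff_sideIndicator_ne hG h.isPath_toWalk.isTrail).1 (by simp)

end EdgeSides

section PairIndicators

variable {G : SimpleGraph V}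

/-- The indicator that both vertices of a pair lie on the side of `e` selected by
`sideIndicator`. -/
noncomputable def pairInside (G : SimpleGraph V) (e : Sym2 V) : Sym2 V → ℝ :=
  Sym2.lift ⟨fun u v ↦ sideIndicator G e u * sideIndicator G e v, fun _ _ ↦ mul_comm _ _⟩

/-- The indicator that both vertices of a pair lie on the side of `e` not selected by
`sideIndicator`. -/
noncomputable def pairOutside (G : SimpleGraph V) (e : Sym2 V) : Sym2 V → ℝ :=
  Sym2.lift ⟨fun u v ↦ (1 - sideIndicator G e u) * (1 - sideIndicator G e v),
    fun _ _ ↦ mul_comm _ _⟩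

/-- The indicator that `e` separates the two vertices of a pair. -/
noncomputable def pairCut (G : SimpleGraph V) (e P : Sym2 V) : ℝ :=
  1 - pairInside G e P - pairOutside G e P

/-- The indicator that `e` separates the pair `P` from the pair `Q`. -/
noncomputable def pairCross (G : SimpleGraph V) (e P Q : Sym2 V) : ℝ :=
  pairInside G e P * pairOutside G e Q + pairOutside G e P * pairInside G e Q

theorem pairInside_mk (e : Sym2 V) (u v : V) :
    pairInside G e s(u, v) = sideIndicator G e u * sideIndicator G e v := rfl

theorem pairOutside_mk (e : Sym2 V) (u v : V) :
    pairOutside G e s(u, v) = (1 - sideIndicator G e u) * (1 - sideIndicator G e v) := rfl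

theorem pairCut_mk (e : Sym2 V) (u v : V) :
    pairCut G e s(u, v) = sideIndicator G e u + sideIndicator G e v -
      2 * (sideIndicator G e u * sideIndicator G e v) := by
  rw [pairCut, pairInside_mk, pairOutside_mk]
  ring

open Classical in
theorem pairCut_mk_eq_ite (e : Sym2 V) (u v : V) :
    pairCut G e s(u, v) = if sideIndicator G e u = sideIndicator G e v then 0 else 1 := by
  rw [pairCut_mk]
  rcases sideIndicator_eq_zero_or_one (G := G) e u with hu | hu <;>
    rcases sideIndicator_eq_zero_or_one (G := G) e v with hv | hv <;> norm_num [hu, hv]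

open Classical in
theorem pairCross_mk_eq_ite (e : Sym2 V) (w x y z : V) :
    pairCross G e s(w, x) s(y, z) =
      if sideIndicator G e w = sideIndicator G e x ∧ sideIndicator G e y = sideIndicator G e z ∧
        sideIndicator G e w ≠ sideIndicator G e y then 1 else 0 := by
  simp only [pairCross, pairInside_mk, pairOutside_mk]
  rcases sideIndicator_eq_zero_or_one (G := G) e w with hw | hw <;>
    rcases sideIndicator_eq_zero_or_one (G := G) e x with hx | hx <;>
    rcases sideIndicator_eq_zero_or_one (G := G) e y with hy | hy <;>
    rcases sideIndicator_eq_zero_or_one (G := G) e z with hz | hz <;>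
    norm_num [hw, hx, hy, hz]

theorem pairCross_nonneg (e P Q : Sym2 V) : 0 ≤ pairCross G e P Q := by
  induction P with | _ w x
  induction Q with | _ y z
  rw [pairCross_mk_eq_ite]
  positivity

-- Both sides equal the number of the four points on the side of `e` containing fewer of them.
theorem pairCut_add_pairCut_add_pairCross_swap (e : Sym2 V) (w x y z : V) :
    pairCut G e s(w, x) + pairCut G e s(y, z) + 2 * pairCross G e s(w, x) s(y, z) =
      pairCut G e s(w, y) + pairCut G e s(x, z) + 2 * pairCross G e s(w, y) s(x, z) := by
  simp only [pairCut_mk, pairCross, pairInside_mk, pairOutside_mk]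
  ring

end PairIndicators

section FourPoint

variable {G : SimpleGraph V}

open Classical in
theorem dist_eq_sum_pairCut [Fintype G.edgeSet] (hT : G.IsTree) (u v : V) :
    (G.dist u v : ℝ) = ∑ e : G.edgeSet, pairCut G e s(u, v) := by
  obtain ⟨p, hp, hlength⟩ := hT.connected.exists_path_of_dist u v
  have hcut (e : G.edgeSet) :
      pairCut G e s(u, v) = if e.1 ∈ p.edges.toFinset then 1 else 0 := by
    simp only [pairCut_mk_eq_ite, List.mem_toFinset,
      mem_edges_iff_sideIndicator_ne hT.isAcyclic hp.isTrail, ite_not]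
  rw [← hlength, ← Walk.length_edges, ← List.toFinset_card_of_nodup hp.isTrail.edges_nodup]
  simp only [hcut, Finset.sum_boole, Nat.cast_inj]
  refine (Finset.card_nbij (↑) (fun e he ↦ by simpa using he) Subtype.val_injective.injOn ?_).symm
  exact fun e he ↦ ⟨⟨e, p.edges_subset_edgeSet (by simpa using he)⟩, by simpa using he, rfl⟩

theorem sideIndicator_eq_of_path_through (hT : G.IsTree) {e : Sym2 V} {a b u v : V}
    (he : sideIndicator G e u = sideIndicator G e v)
    (hab : sideIndicator G s(a, b) u ≠ sideIndicator G s(a, b) v) :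
    sideIndicator G e u = sideIndicator G e a := by
  classical
  obtain ⟨p, hp, -⟩ := hT.connected.exists_path_of_dist u v
  have he_notMem : e ∉ p.edges := by
    rwa [mem_edges_iff_sideIndicator_ne hT.isAcyclic hp.isTrail, not_ne_iff]
  have hab_mem : s(a, b) ∈ p.edges :=
    (mem_edges_iff_sideIndicator_ne hT.isAcyclic hp.isTrail).2 hab
  have ha := p.fst_mem_support_of_mem_edges hab_mem
  exact sideIndicator_eq_of_notMem_edges (p.takeUntil a ha)
    fun h ↦ he_notMem (p.edges_takeUntil_subset_edges ha h)

-- Edge cuts of a tree are compatible: no two of them split four points two against two differently.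
theorem pairCross_eq_zero_of_pairCross_ne_zero (hT : G.IsTree) {e : Sym2 V} {w x y z : V}
    (he : pairCross G e s(w, x) s(y, z) ≠ 0) (f : Sym2 V) :
    pairCross G f s(w, y) s(x, z) = 0 := by
  induction f with | _ a b
  rw [pairCross_mk_eq_ite] at he ⊢
  obtain ⟨hwx, hyz, hwy⟩ := (ite_ne_right_iff.1 he).1
  refine if_neg fun ⟨fwy, fxz, fwx⟩ ↦ hwy ?_
  have fyz : sideIndicator G s(a, b) y ≠ sideIndicator G s(a, b) z := by rwa [← fwy, ← fxz]
  rw [sideIndicator_eq_of_path_through hT hwx fwx, sideIndicator_eq_of_path_through hT hyz fyz]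

theorem max4_eq_sum [Fintype G.edgeSet] (hT : G.IsTree) (w x y z : V) :
    (max4 G w x y z : ℝ) = ∑ e : G.edgeSet,
      (pairCut G e s(w, x) + pairCut G e s(y, z) + 2 * pairCross G e s(w, x) s(y, z)) := by
  have hle (e : Sym2 V) (a b c d : V) : pairCut G e s(a, b) + pairCut G e s(c, d) ≤
      pairCut G e s(a, b) + pairCut G e s(c, d) + 2 * pairCross G e s(a, b) s(c, d) := by
    linarith [pairCross_nonneg (G := G) e s(a, b) s(c, d)]
  simp only [max4, Nat.cast_max, Nat.cast_add, dist_eq_sum_pairCut hT, ← Finset.sum_add_distrib]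
  apply le_antisymm
  · refine max_le ?_ (max_le ?_ ?_) <;> refine Finset.sum_le_sum fun e _ ↦ ?_
    · exact hle e.1 w x y z
    · rw [pairCut_add_pairCut_add_pairCross_swap]
      exact hle e.1 w y x z
    · rw [Sym2.eq_swap (a := y), pairCut_add_pairCut_add_pairCross_swap, Sym2.eq_swap (a := x)]
      exact hle e.1 w z y x
  · by_cases h : ∃ e : G.edgeSet, pairCross G e s(w, x) s(y, z) ≠ 0
    · obtain ⟨e, he⟩ := h
      refine le_max_of_le_right (le_max_of_le_left (Finset.sum_le_sum fun f _ ↦ ?_))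
      rw [pairCut_add_pairCut_add_pairCross_swap, pairCross_eq_zero_of_pairCross_ne_zero hT he]
      simp
    · push Not at h
      refine le_max_of_le_left (Finset.sum_le_sum fun e _ ↦ ?_)
      simp [h e]

end FourPoint

section Leaves

variable {G : SimpleGraph V}

/-- A pendant vertex: a vertex with exactly one neighbour. Unlike `G.degree v = 1`, this needs no
finiteness instance. -/
def IsLeaf (G : SimpleGraph V) (v : V) : Prop :=
  ∃! u, G.Adj v u

/-- An edge with a leaf as an endpoint. -/
def IsPendantEdge (G : SimpleGraph V) (e : Sym2 V) : Prop :=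
  ∃ v ∈ e, IsLeaf G v

/-- The edges of `G` neither of whose endpoints is a leaf. -/
abbrev InternalEdge (G : SimpleGraph V) : Type _ :=
  {e : G.edgeSet // ¬ IsPendantEdge G e}

theorem eq_or_eq_of_isLeaf_of_isLeaf (hG : G.Preconnected) {l u : V} (hl : IsLeaf G l)
    (hu : IsLeaf G u) (h : G.Adj l u) (w : V) : w = l ∨ w = u := by
  induction (reachable_iff_reflTransGen l w).1 (hG l w) with
  | refl => exact .inl rfl
  | tail _ hadj ih =>
    rcases ih with rfl | rfl
    · exact .inr (hl.unique hadj h)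
    · exact .inl (hu.unique hadj h.symm)

theorem not_isLeaf_of_adj_isLeaf [Fintype V] (hG : G.Preconnected) (hV : 2 < Fintype.card V)
    {l u : V} (hl : IsLeaf G l) (h : G.Adj l u) : ¬ IsLeaf G u := by
  intro hu
  obtain ⟨a, b, c, hab, hac, hbc⟩ := Fintype.two_lt_card_iff.1 hV
  have hor := eq_or_eq_of_isLeaf_of_isLeaf hG hl hu h
  grind [hor a, hor b, hor c]

theorem sideIndicator_ne_of_isLeaf (hT : G.IsTree) {l u w : V} (hl : IsLeaf G l)
    (h : G.Adj l u) (hw : w ≠ l) :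
    sideIndicator G s(l, u) l ≠ sideIndicator G s(l, u) w := by
  obtain ⟨p, hp⟩ := hT.connected.exists_isPath l w
  rw [← mem_edges_iff_sideIndicator_ne hT.isAcyclic hp.isTrail]
  cases p with
  | nil => exact absurd rfl hw
  | cons hadj q => simp [hl.unique h hadj]

-- One side of a pendant edge is a single vertex, which cannot contain a pair.
theorem pairCross_eq_zero_of_isPendantEdge (hT : G.IsTree) {e P Q : Sym2 V} (he : e ∈ G.edgeSet)
    (hpendant : IsPendantEdge G e) (hP : ¬ P.IsDiag) (hQ : ¬ Q.IsDiag) :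
    pairCross G e P Q = 0 := by
  obtain ⟨l, ⟨u, rfl⟩, hl⟩ := hpendant
  have hside (w : V) : w ≠ l → sideIndicator G s(l, u) l ≠ sideIndicator G s(l, u) w :=
    sideIndicator_ne_of_isLeaf hT hl he
  induction P with | _ w x
  induction Q with | _ y z
  rw [Sym2.mk_isDiag_iff] at hP hQ
  rw [pairCross_mk_eq_ite, if_neg]
  have := sideIndicator_eq_zero_or_one (G := G) s(l, u)
  grind

theorem card_isLeaf_eq_card_isPendantEdge [Fintype V] [Fintype {v // IsLeaf G v}]
    [Fintype {e : G.edgeSet // IsPendantEdge G e}] (hG : G.Preconnected)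
    (hV : 2 < Fintype.card V) :
    Fintype.card {v // IsLeaf G v} = Fintype.card {e : G.edgeSet // IsPendantEdge G e} := by
  choose neighbor hadj _ using fun v : {v // IsLeaf G v} ↦ v.2
  let edgeAt (v : {v // IsLeaf G v}) : {e : G.edgeSet // IsPendantEdge G e} :=
    ⟨⟨s(v.1, neighbor v), hadj v⟩, v.1, Sym2.mem_mk_left _ _, v.2⟩
  refine Fintype.card_of_bijective (f := edgeAt) ⟨fun a b hab ↦ ?_, ?_⟩
  · have hab : s(a.1, neighbor a) = s(b.1, neighbor b) := congrArg (·.1.1) hab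
    rcases Sym2.eq_iff.1 hab with ⟨h, -⟩ | ⟨-, h⟩
    · exact Subtype.ext h
    · exact absurd b.2 (not_isLeaf_of_adj_isLeaf hG hV a.2 (h ▸ hadj a))
  · rintro ⟨⟨e, he⟩, hpendant⟩
    obtain ⟨l, ⟨u, rfl⟩, hl⟩ : ∃ l ∈ e, IsLeaf G l := hpendant
    have hneighbor : neighbor ⟨l, hl⟩ = u := hl.unique (hadj ⟨l, hl⟩) he
    exact ⟨⟨l, hl⟩, Subtype.ext (Subtype.ext (congrArg (s(l, ·)) hneighbor))⟩

theorem card_internalEdge_add_one_add_card_isLeaf [Fintype V] [Fintype (InternalEdge G)]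
    [Fintype {v // IsLeaf G v}] (hT : G.IsTree) (hV : 2 < Fintype.card V) :
    Fintype.card (InternalEdge G) + 1 + Fintype.card {v // IsLeaf G v} = Fintype.card V := by
  classical
  have hsplit : Fintype.card {e : G.edgeSet // IsPendantEdge G e} +
      Fintype.card (InternalEdge G) = Fintype.card G.edgeSet := by
    rw [← Fintype.card_sum]
    exact Fintype.card_congr (Equiv.sumCompl _)
  have hedges := hT.card_edgeFinset
  rw [edgeFinset_card] at hedges
  rw [card_isLeaf_eq_card_isPendantEdge hT.connected.preconnected hV]
  omega

end Leaves

section Factorization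

open Matrix

variable {G : SimpleGraph V}

/-- The rows `P ↦ 1` (at `none`) and `P ↦ 2 * pairInside G e P` (at `some e`), which are paired
with the rows of `outsideMatrix` to form the hyperbolic planes making up `max4MatrixR`. -/
noncomputable def insideMatrix (G : SimpleGraph V) :
    Matrix (Option (InternalEdge G)) {P : Sym2 V // ¬ P.IsDiag} ℝ :=
  fun i P ↦ i.elim 1 fun e ↦ 2 * pairInside G e P

/-- The rows `P ↦ ∑ e, pairCut G e P`, which for a tree is the distance of the two vertices of `P`
(at `none`), and `pairOutside G e` (at `some e`). -/
noncomputable def outsideMatrix (G : SimpleGraph V) [Fintype G.edgeSet] :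
    Matrix (Option (InternalEdge G)) {P : Sym2 V // ¬ P.IsDiag} ℝ :=
  fun i P ↦ i.elim (∑ e : G.edgeSet, pairCut G e P) fun e ↦ pairOutside G e P

theorem sum_pairCross_eq_sum_internalEdge [Fintype G.edgeSet] [Fintype (InternalEdge G)]
    (hT : G.IsTree) {P Q : Sym2 V} (hP : ¬ P.IsDiag) (hQ : ¬ Q.IsDiag) :
    ∑ e : G.edgeSet, pairCross G e P Q = ∑ e : InternalEdge G, pairCross G e P Q := by
  classical
  rw [← Fintype.sum_subtype_add_sum_subtype fun e : G.edgeSet ↦ IsPendantEdge G e,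
    Fintype.sum_eq_zero _ fun e ↦
      pairCross_eq_zero_of_isPendantEdge hT e.1.2 e.2 hP hQ, zero_add]
  congr!

theorem max4MatrixR_eq_transpose_mul_add_transpose_mul [Fintype V] [DecidableEq V]
    [Fintype G.edgeSet] [Fintype (InternalEdge G)] (hT : G.IsTree) :
    max4MatrixR G = (insideMatrix G)ᵀ * outsideMatrix G + (outsideMatrix G)ᵀ * insideMatrix G := by
  ext ⟨P, hP⟩ ⟨Q, hQ⟩
  have hmax : max4MatrixR G ⟨P, hP⟩ ⟨Q, hQ⟩ =
      ∑ e : G.edgeSet, (pairCut G e P + pairCut G e Q + 2 * pairCross G e P Q) := by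
    induction P with | _ w x
    induction Q with | _ y z
    exact max4_eq_sum hT w x y z
  rw [hmax, Finset.sum_add_distrib, Finset.sum_add_distrib, ← Finset.mul_sum,
    sum_pairCross_eq_sum_internalEdge hT hP hQ]
  simp only [Matrix.add_apply, mul_apply, transpose_apply, Fintype.sum_option,
    insideMatrix, outsideMatrix, Option.elim, pairCross, mul_add, Finset.mul_sum,
    Finset.sum_add_distrib, mul_one, one_mul]
  simp only [mul_assoc, mul_left_comm]
  ring

end Factorization

section Independence

variable {G : SimpleGraph V}

theorem pairCut_self (hG : G.IsAcyclic) {e : Sym2 V} (he : e ∈ G.edgeSet) :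
    pairCut G e e = 1 := by
  induction e with | _ a b
  rw [pairCut_mk_eq_ite, if_neg (sideIndicator_ne_of_adj hG he)]

theorem pairCut_eq_zero_of_ne {e f : Sym2 V} (hf : f ∈ G.edgeSet) (hef : e ≠ f) :
    pairCut G e f = 0 := by
  induction f with | _ a b
  rw [pairCut_mk_eq_ite, if_pos (sideIndicator_eq_of_adj_of_ne hf hef)]

theorem pairCut_mk_eq_add_of_adj {u v w : V} (huv : G.Adj u v) (hvw : G.Adj v w) (huw : u ≠ w)
    (e : Sym2 V) : pairCut G e s(u, w) = pairCut G e s(u, v) + pairCut G e s(v, w) := by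
  have hne : s(u, v) ≠ s(v, w) := by
    rw [Sym2.eq_swap, Ne, Sym2.congr_right]
    exact huw
  by_cases he : e = s(u, v)
  · have hcut : pairCut G e s(v, w) = 0 := pairCut_eq_zero_of_ne hvw (he ▸ hne)
    rw [hcut, add_zero, pairCut_mk, pairCut_mk, sideIndicator_eq_of_adj_of_ne hvw (he ▸ hne)]
  · have hcut : pairCut G e s(u, v) = 0 := pairCut_eq_zero_of_ne huv he
    rw [hcut, zero_add, pairCut_mk, pairCut_mk, sideIndicator_eq_of_adj_of_ne huv he]

section Coefficients

variable {ι : Type*} [Fintype ι] {f : ι → G.edgeSet}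

theorem sum_mul_pairCut_self (hG : G.IsAcyclic) (hf : f.Injective) (c : ι → ℝ) (i : ι) :
    ∑ j, c j * pairCut G (f j) (f i) = c i := by
  rw [Fintype.sum_eq_single i fun j hj ↦ ?_, pairCut_self hG (f i).2, mul_one]
  rw [pairCut_eq_zero_of_ne (f i).2 (Subtype.coe_injective.ne (hf.ne hj)), mul_zero]

theorem eq_zero_of_forall_add_sum_mul_sideIndicator_eq_zero (hG : G.IsAcyclic)
    (hf : f.Injective) {a : ℝ} {c : ι → ℝ}
    (h : ∀ v, a + ∑ i, c i * sideIndicator G (f i) v = 0) : c = 0 := by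
  ext i
  obtain ⟨u, v, huv⟩ : ∃ u v, s(u, v) = (f i : Sym2 V) := ⟨_, _, Quot.out_eq _⟩
  have hadj : G.Adj u v := by simpa [← huv] using (f i).2
  have hsum : ∑ j, c j * (sideIndicator G (f j) u - sideIndicator G (f j) v) = 0 := by
    simp only [mul_sub, Finset.sum_sub_distrib]
    linarith [h u, h v]
  rw [Fintype.sum_eq_single i fun j hj ↦ ?_, ← huv] at hsum
  · exact (mul_eq_zero.1 hsum).resolve_right (sub_ne_zero.2 (sideIndicator_ne_of_adj hG hadj))
  · have hji : (f j : Sym2 V) ≠ s(u, v) := huv ▸ Subtype.coe_injective.ne (hf.ne hj)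
    rw [sideIndicator_eq_of_adj_of_ne hadj hji, sub_self, mul_zero]

end Coefficients

theorem exists_isPendantEdge [Finite V] [Nontrivial V] (hT : G.IsTree) :
    ∃ e ∈ G.edgeSet, IsPendantEdge G e := by
  classical
  have := Fintype.ofFinite V
  obtain ⟨l, hl⟩ := hT.exists_vert_degree_one_of_nontrivial
  rw [degree_eq_one_iff_existsUnique_adj] at hl
  exact ⟨_, hl.exists.choose_spec, l, Sym2.mem_mk_left _ _, hl⟩

-- Two neighbours `u`, `w` of a non-leaf `v` give three relations, on `uv`, `vw` and `uw`, that
-- combine to `2 * h v = 0`.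
theorem eq_zero_of_additive_add_add_eq_zero [Fintype V] (hG : G.Preconnected)
    (hV : 2 < Fintype.card V) {D : Sym2 V → ℝ} {h : V → ℝ}
    (hD : ∀ ⦃u v w⦄, G.Adj u v → G.Adj v w → u ≠ w → D s(u, w) = D s(u, v) + D s(v, w))
    (hDh : ∀ ⦃a b⦄, a ≠ b → D s(a, b) + h a + h b = 0)
    (hleaf : ∀ ⦃l u⦄, IsLeaf G l → G.Adj l u → h l = h u) (v : V) : h v = 0 := by
  have : Nontrivial V := Fintype.one_lt_card_iff_nontrivial.1 (by omega)
  have hnonleaf (v : V) (hv : ¬ IsLeaf G v) : h v = 0 := by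
    obtain ⟨u, hu⟩ := hG.exists_adj_of_nontrivial v
    obtain ⟨w, hw, hwu⟩ : ∃ w, G.Adj v w ∧ w ≠ u := by
      by_contra! hunique
      exact hv ⟨u, hu, hunique⟩
    linarith [hD hu.symm hw hwu.symm, hDh hu.symm.ne, hDh hw.ne, hDh hwu.symm]
  by_cases hv : IsLeaf G v
  · obtain ⟨u, hu⟩ := hG.exists_adj_of_nontrivial v
    rw [hleaf hv hu, hnonleaf u (not_isLeaf_of_adj_isLeaf hG hV hv hu)]
  · exact hnonleaf v hv

end Independence

section RowRelation

open Matrix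

variable {G : SimpleGraph V}

/-- `α`, `x`, `β`, `y` are the coefficients of a linear relation among the rows of `insideMatrix G`
(indexed by `none` and by internal edges, respectively) and those of `outsideMatrix G`. -/
def IsRowRelation (G : SimpleGraph V) [Fintype G.edgeSet] [Fintype (InternalEdge G)]
    (α : ℝ) (x : InternalEdge G → ℝ) (β : ℝ) (y : InternalEdge G → ℝ) : Prop :=
  ∀ P : Sym2 V, ¬ P.IsDiag → α + ∑ e, x e * (2 * pairInside G e P) +
    (β * ∑ e : G.edgeSet, pairCut G e P + ∑ e, y e * pairOutside G e P) = 0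

namespace IsRowRelation

variable [Fintype G.edgeSet] [Fintype (InternalEdge G)] {α β : ℝ} {x y : InternalEdge G → ℝ}

-- If `σ` indicates a side of `e`, then on `s(a, b)` we have `2 * pairInside = σ a + σ b - pairCut`
-- and `2 * pairOutside = 2 - (σ a + σ b) - pairCut`.
theorem cut_sum_add_side_sum_add_side_sum_eq_zero (hrel : IsRowRelation G α x β y) {a b : V}
    (hab : a ≠ b) :
    2 * β * ∑ e : G.edgeSet, pairCut G e s(a, b) - ∑ e, (2 * x e + y e) * pairCut G e s(a, b) +
      (α + ∑ e, y e + ∑ e, (2 * x e - y e) * sideIndicator G e a) +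
      (α + ∑ e, y e + ∑ e, (2 * x e - y e) * sideIndicator G e b) = 0 := by
  have hsplit : ∑ e, (2 * (x e * (2 * pairInside G e s(a, b))) +
        2 * (y e * pairOutside G e s(a, b))) =
      ∑ e, (2 * y e - (2 * x e + y e) * pairCut G e s(a, b) +
        (2 * x e - y e) * sideIndicator G e a + (2 * x e - y e) * sideIndicator G e b) := by
    refine Finset.sum_congr rfl fun e _ ↦ ?_
    rw [pairCut_mk, pairInside_mk, pairOutside_mk]
    ring
  simp only [Finset.sum_add_distrib, Finset.sum_sub_distrib, ← Finset.mul_sum] at hsplit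
  linarith [hrel s(a, b) hab]

theorem side_sum_eq_zero [Fintype V] (hrel : IsRowRelation G α x β y) (hG : G.Preconnected)
    (hV : 2 < Fintype.card V) (v : V) :
    α + ∑ e, y e + ∑ e, (2 * x e - y e) * sideIndicator G e v = 0 := by
  refine eq_zero_of_additive_add_add_eq_zero hG hV
    (D := fun P ↦ 2 * β * ∑ e : G.edgeSet, pairCut G e P - ∑ e, (2 * x e + y e) * pairCut G e P)
    (h := fun v ↦ α + ∑ e, y e + ∑ e, (2 * x e - y e) * sideIndicator G e v)
    (fun u v w huv hvw huw ↦ ?_) (fun a b ↦ hrel.cut_sum_add_side_sum_add_side_sum_eq_zero)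
    (fun l u hl hlu ↦ ?_) v
  · simp only [pairCut_mk_eq_add_of_adj huv hvw huw, mul_add, Finset.sum_add_distrib]
    ring
  · have hside (e : InternalEdge G) : sideIndicator G e l = sideIndicator G e u :=
      sideIndicator_eq_of_adj_of_ne hlu fun he ↦ e.2 ⟨l, he ▸ Sym2.mem_mk_left l u, hl⟩
    simp only [hside]

theorem cut_sum_eq_zero [Fintype V] (hrel : IsRowRelation G α x β y) (hG : G.Preconnected)
    (hV : 2 < Fintype.card V) {P : Sym2 V} (hP : ¬ P.IsDiag) :
    2 * β * ∑ e : G.edgeSet, pairCut G e P - ∑ e, (2 * x e + y e) * pairCut G e P = 0 := by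
  induction P with | _ a b
  linarith [hrel.cut_sum_add_side_sum_add_side_sum_eq_zero hP, hrel.side_sum_eq_zero hG hV a,
    hrel.side_sum_eq_zero hG hV b]

theorem coeff_eq_zero [Fintype V] (hrel : IsRowRelation G α x β y) (hT : G.IsTree)
    (hV : 2 < Fintype.card V) : α = 0 ∧ x = 0 ∧ β = 0 ∧ y = 0 := by
  have hG := hT.connected.preconnected
  have : Nontrivial V := Fintype.one_lt_card_iff_nontrivial.1 (by omega)
  have hsum (e : G.edgeSet) : ∑ f : G.edgeSet, pairCut G f e = 1 := by
    simpa using sum_mul_pairCut_self hT.isAcyclic Function.injective_id (fun _ ↦ 1) e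
  have hβ : β = 0 := by
    obtain ⟨e, he, hpendant⟩ := exists_isPendantEdge hT
    have hinternal (f : InternalEdge G) : pairCut G f e = 0 :=
      pairCut_eq_zero_of_ne he fun hfe ↦ f.2 (hfe ▸ hpendant)
    simpa [hinternal, hsum ⟨e, he⟩] using
      hrel.cut_sum_eq_zero hG hV (G.not_isDiag_of_mem_edgeSet he)
  have hadd (e : InternalEdge G) : 2 * x e + y e = 0 := by
    have h := hrel.cut_sum_eq_zero hG hV (G.not_isDiag_of_mem_edgeSet e.1.2)
    rw [sum_mul_pairCut_self hT.isAcyclic Subtype.val_injective fun e ↦ 2 * x e + y e, hβ] at h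
    linarith
  have hsub (e : InternalEdge G) : 2 * x e - y e = 0 :=
    congrFun (eq_zero_of_forall_add_sum_mul_sideIndicator_eq_zero hT.isAcyclic
      Subtype.val_injective (hrel.side_sum_eq_zero hG hV)) e
  have hx : x = 0 := funext fun e ↦ show x e = 0 by linarith [hadd e, hsub e]
  have hy : y = 0 := funext fun e ↦ show y e = 0 by linarith [hadd e, hsub e]
  obtain ⟨v⟩ := hT.connected.nonempty
  exact ⟨by simpa [hx, hy] using hrel.side_sum_eq_zero hG hV v, hx, hβ, hy⟩

end IsRowRelation

theorem linearIndependent_row_fromRows_insideMatrix_outsideMatrix [Fintype V]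
    [Fintype G.edgeSet] (hT : G.IsTree) (hV : 2 < Fintype.card V) :
    LinearIndependent ℝ (fromRows (insideMatrix G) (outsideMatrix G)).row := by
  have := Fintype.ofFinite (InternalEdge G)
  rw [Fintype.linearIndependent_iff]
  intro c hc
  have hrel : IsRowRelation G (c (.inl none)) (fun e ↦ c (.inl (some e)))
      (c (.inr none)) (fun e ↦ c (.inr (some e))) := fun P hP ↦ by
    simpa [insideMatrix, outsideMatrix, Fintype.sum_option, row] using congrFun hc ⟨P, hP⟩
  obtain ⟨hα, hx, hβ, hy⟩ := hrel.coeff_eq_zero hT hV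
  rintro ((_ | e) | (_ | e))
  exacts [hα, congrFun hx e, hβ, congrFun hy e]

end RowRelation

/-- Inertia of `Max4PC_T`: for a tree `T` on `n ≥ 3` vertices with `p` pendant
vertices, the real symmetric matrix `Max4PC_T` has `n - p` positive eigenvalues,
`n - p` negative eigenvalues, and the eigenvalue `0` with multiplicity
`C(n,2) - 2(n-p)` (eigenvalues are the roots of the characteristic polynomial,
counted with multiplicity). -/
theorem inertia_max4Matrix {V : Type*} [Fintype V] [DecidableEq V]
    (G : SimpleGraph V) [DecidableRel G.Adj] (hT : G.IsTree) (n p : ℕ)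
    (hn : Fintype.card V = n) (hn3 : 3 ≤ n)
    (hp : (Finset.univ.filter fun v : V => G.degree v = 1).card = p) :
    (((max4MatrixR G).charpoly.roots.filter fun x => 0 < x).card = n - p) ∧
    (((max4MatrixR G).charpoly.roots.filter fun x => x < 0).card = n - p) ∧
    Multiset.count (0 : ℝ) (max4MatrixR G).charpoly.roots =
      Nat.choose n 2 - 2 * (n - p) := by
  classical
  subst hn hp
  obtain ⟨hpos, hneg, hzero⟩ := inertia_transpose_mul_add_transpose_mul
    (max4MatrixR_eq_transpose_mul_add_transpose_mul hT)
    (linearIndependent_row_fromRows_insideMatrix_outsideMatrix hT hn3)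
  have hleaves : (Finset.univ.filter fun v : V ↦ G.degree v = 1).card =
      Fintype.card {v // IsLeaf G v} :=
    (Fintype.card_of_subtype _ fun v ↦ by
      simp [degree_eq_one_iff_existsUnique_adj, IsLeaf]).symm
  have hindex := card_internalEdge_add_one_add_card_isLeaf hT hn3
  rw [Fintype.card_option] at hpos hneg hzero
  rw [Sym2.card_subtype_not_diag] at hzero
  omega
end
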